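/- Let d ≥ 1 and let 𝒬 be a finite set of dyadic cubes in ℝ^d such that every dyadic cube P ⊆ ⋃_{Q∈𝒬} Q that contains some member of 𝒬 itself belongs to 𝒬. Let Ω ⊆ ℝ^d be an open set with ⋃_{Q∈𝒬} interior(Q) ⊆ Ω, and let f ∈ L¹(Ω). Define M_𝒬 f(x) = max { f(x), max{ f_Q : Q ∈ 𝒬, x ∈ Q } }. Then there is a constant C depending only on d such that var_Ω (M_𝒬 f) ≤ C · var_Ω f. -/

import Mathlib

open MeasureTheory Metric Set Filter
open scoped ENNReal Topology

noncomputable section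

/-- `ℝ^d` as Euclidean space. -/
abbrev Ed (d : ℕ) := EuclideanSpace ℝ (Fin d)

/-- A dyadic cube `∏_i [2^n m_i, 2^n (m_i + 1))`. -/
def IsDyadicCube {d : ℕ} (Q : Set (Ed d)) : Prop :=
  ∃ (n : ℤ) (m : Fin d → ℤ),
    Q = {x : Ed d | ∀ i, x i ∈ Set.Ico ((2:ℝ)^n * m i) ((2:ℝ)^n * (m i + 1))}

/-- Divergence of a vector field `φ : ℝ^d → ℝ^d`. -/
def divergence {d : ℕ} (φ : Ed d → Ed d) (x : Ed d) : ℝ :=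
  ∑ i, fderiv ℝ φ x (EuclideanSpace.single i 1) i

/-- The variation of `f` in `Ω`. -/
def var {d : ℕ} (Ω : Set (Ed d)) (f : Ed d → ℝ) : ℝ≥0∞ :=
  ⨆ φ ∈ {φ : Ed d → Ed d | ContDiff ℝ 1 φ ∧ HasCompactSupport φ ∧ tsupport φ ⊆ Ω ∧
      ∀ x, ‖φ x‖ ≤ 1},
    ENNReal.ofReal (∫ x in Ω, f x * divergence φ x)

/-- The maximal function associated to a finite family `𝒬` of dyadic cubes:
`M_𝒬 f(x) = max { f(x), ⨍_Q f : Q ∈ 𝒬, x ∈ Q }`. -/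
def finMaxFun {d : ℕ} (𝒬 : Finset (Set (Ed d))) (f : Ed d → ℝ) (x : Ed d) : ℝ :=
  sSup ({f x} ∪ {y : ℝ | ∃ Q ∈ 𝒬, x ∈ Q ∧ y = ⨍ z in Q, f z})

namespace DyadicVariation

/-! ### Dyadic cubes of cells

A cell is an integer point. The pair `(k, m)` stands for the dyadic cube of side `2 ^ k` which
consists of all cells `x` with `⌊x i / 2 ^ k⌋ = m i` for every `i`. -/

section Discrete

variable {d : ℕ}

/-- The index of the dyadic cube of side `2 ^ k` that contains `x`. -/
def anc (k : ℕ) (x : Fin d → ℤ) : Fin d → ℤ := fun i => x i / 2 ^ k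

/-- The cells of a dyadic cube. -/
def cells (Q : ℕ × (Fin d → ℤ)) : Finset (Fin d → ℤ) :=
  Fintype.piFinset fun i => Finset.Ico (2 ^ Q.1 * Q.2 i) (2 ^ Q.1 * (Q.2 i + 1))

lemma mem_cells {Q : ℕ × (Fin d → ℤ)} {x : Fin d → ℤ} :
    x ∈ cells Q ↔ ∀ i, 2 ^ Q.1 * Q.2 i ≤ x i ∧ x i < 2 ^ Q.1 * (Q.2 i + 1) := by
  simp [cells]

lemma mem_cells_iff_anc {Q : ℕ × (Fin d → ℤ)} {x : Fin d → ℤ} :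
    x ∈ cells Q ↔ anc Q.1 x = Q.2 := by
  rw [mem_cells, funext_iff]
  refine forall_congr' fun i => ?_
  have h : (0 : ℤ) < 2 ^ Q.1 := by positivity
  simp only [anc]
  rw [le_antisymm_iff, ← Int.lt_add_one_iff (a := x i / _), Int.ediv_lt_iff_lt_mul h,
    Int.le_ediv_iff_mul_le h, mul_comm (Q.2 i), mul_comm (Q.2 i + 1), and_comm]

lemma mem_cells_anc (k : ℕ) (x : Fin d → ℤ) : x ∈ cells (k, anc k x) :=
  mem_cells_iff_anc.2 rfl

lemma anc_anc (j k : ℕ) (x : Fin d → ℤ) : anc j (anc k x) = anc (k + j) x := by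
  ext i
  simp only [anc, pow_add]
  rw [Int.ediv_ediv_of_nonneg (by positivity)]

lemma eq_of_mem_cells {P Q : ℕ × (Fin d → ℤ)} {x : Fin d → ℤ} (hP : x ∈ cells P)
    (hQ : x ∈ cells Q) (h : P.1 = Q.1) : P = Q := by
  rw [mem_cells_iff_anc] at hP hQ
  exact Prod.ext h (by rw [← hP, ← hQ, h])

lemma cells_subset {P Q : ℕ × (Fin d → ℤ)} {x : Fin d → ℤ} (hP : x ∈ cells P)
    (hQ : x ∈ cells Q) (h : P.1 ≤ Q.1) : cells P ⊆ cells Q := by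
  intro y hy
  rw [mem_cells_iff_anc] at *
  obtain ⟨j, hj⟩ := Nat.exists_eq_add_of_le h
  rw [← hQ, hj, ← anc_anc, ← anc_anc, hy, hP]

lemma card_cells (Q : ℕ × (Fin d → ℤ)) : ((cells Q).card : ℝ) = (2 ^ Q.1) ^ d := by
  have h : ∀ i, (Finset.Ico (2 ^ Q.1 * Q.2 i) (2 ^ Q.1 * (Q.2 i + 1))).card = 2 ^ Q.1 := by
    intro i
    rw [Int.card_Ico, show 2 ^ Q.1 * (Q.2 i + 1) - 2 ^ Q.1 * Q.2 i = ((2 ^ Q.1 : ℕ) : ℤ) by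
      push_cast; ring, Int.toNat_natCast]
  simp [cells, h]

lemma card_cells_pos (Q : ℕ × (Fin d → ℤ)) : 0 < ((cells Q).card : ℝ) := by
  rw [card_cells]; positivity

lemma cells_nonempty (Q : ℕ × (Fin d → ℤ)) : (cells Q).Nonempty := by
  have := card_cells_pos Q
  rw [← Finset.card_pos]
  exact_mod_cast this

/-- The neighbour of `x` in the positive `i`-th direction. -/
def shift (x : Fin d → ℤ) (i : Fin d) : Fin d → ℤ := Function.update x i (x i + 1)

/-- The edges of the grid with both endpoints in a cube. -/
def edges (Q : ℕ × (Fin d → ℤ)) : Finset ((Fin d → ℤ) × Fin d) :=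
  (cells Q ×ˢ Finset.univ).filter fun e => shift e.1 e.2 ∈ cells Q

lemma mem_edges {Q : ℕ × (Fin d → ℤ)} {e : (Fin d → ℤ) × Fin d} :
    e ∈ edges Q ↔ e.1 ∈ cells Q ∧ shift e.1 e.2 ∈ cells Q := by
  simp [edges]

/-- The discrete derivative of `h` along an edge, in absolute value. -/
def jump (h : (Fin d → ℤ) → ℝ) (e : (Fin d → ℤ) × Fin d) : ℝ := |h (shift e.1 e.2) - h e.1|

lemma jump_nonneg (h : (Fin d → ℤ) → ℝ) (e : (Fin d → ℤ) × Fin d) : 0 ≤ jump h e := abs_nonneg _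

lemma update_mem_cells {Q : ℕ × (Fin d → ℤ)} {w : Fin d → ℤ} (hw : w ∈ cells Q) (i : Fin d)
    {t : ℤ} : Function.update w i t ∈ cells Q ↔
      t ∈ Finset.Ico (2 ^ Q.1 * Q.2 i) (2 ^ Q.1 * (Q.2 i + 1)) := by
  rw [mem_cells] at hw
  rw [mem_cells, Finset.mem_Ico]
  constructor
  · intro h
    simpa using h i
  · intro h j
    by_cases hj : j = i
    · subst hj; simpa using h
    · simpa [hj] using hw j

lemma sum_update_line (Q : ℕ × (Fin d → ℤ)) (i : Fin d) (g : (Fin d → ℤ) → ℝ) :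
    ∑ w ∈ cells Q, ∑ t ∈ Finset.Ico (2 ^ Q.1 * Q.2 i) (2 ^ Q.1 * (Q.2 i + 1)),
      g (Function.update w i t) = 2 ^ Q.1 * ∑ w ∈ cells Q, g w := by
  set I := Finset.Ico (2 ^ Q.1 * Q.2 i) (2 ^ Q.1 * (Q.2 i + 1)) with hI
  have hcard : (I.card : ℝ) = 2 ^ Q.1 := by
    rw [hI, Int.card_Ico, show 2 ^ Q.1 * (Q.2 i + 1) - 2 ^ Q.1 * Q.2 i = ((2 ^ Q.1 : ℕ) : ℤ) by
      push_cast; ring, Int.toNat_natCast]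
    simp
  have hcoord : ∀ w ∈ cells Q, w i ∈ I := fun w hw => by
    rw [← update_mem_cells hw i (t := w i)]; simpa using hw
  calc ∑ w ∈ cells Q, ∑ t ∈ I, g (Function.update w i t)
      = ∑ p ∈ cells Q ×ˢ I, g (Function.update p.1 i p.2) := by rw [Finset.sum_product]
    _ = ∑ p ∈ cells Q ×ˢ I, g p.1 := by
        refine Finset.sum_nbij' (fun p => (Function.update p.1 i p.2, p.1 i))
          (fun p => (Function.update p.1 i p.2, p.1 i)) ?_ ?_ ?_ ?_ ?_
        · rintro ⟨w, t⟩ hp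
          rw [Finset.mem_product] at hp ⊢
          exact ⟨(update_mem_cells hp.1 i).2 hp.2, hcoord _ hp.1⟩
        · rintro ⟨w, t⟩ hp
          rw [Finset.mem_product] at hp ⊢
          exact ⟨(update_mem_cells hp.1 i).2 hp.2, hcoord _ hp.1⟩
        · rintro ⟨w, t⟩ -
          simp
        · rintro ⟨w, t⟩ -
          simp
        · rintro ⟨w, t⟩ -
          rfl
    _ = 2 ^ Q.1 * ∑ w ∈ cells Q, g w := by
        rw [Finset.sum_product, Finset.mul_sum]
        simp [hcard]

lemma abs_sub_le_sum_Ico (u : ℤ → ℝ) {a b : ℤ} (hab : a ≤ b) :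
    |u b - u a| ≤ ∑ r ∈ Finset.Ico a b, |u (r + 1) - u r| := by
  induction b, hab using Int.leInduction with
  | base => simp
  | succ b hb ih =>
    rw [← Finset.insert_Ico_right_eq_Ico_add_one hb, Finset.sum_insert (by simp)]
    calc |u (b + 1) - u a| ≤ |u (b + 1) - u b| + |u b - u a| := abs_sub_le _ _ _
      _ ≤ _ := by gcongr

/-- The total jump of `h` along the line in direction `i` through `w`, inside the cube `Q`. -/
def lineVar (h : (Fin d → ℤ) → ℝ) (Q : ℕ × (Fin d → ℤ)) (i : Fin d) (w : Fin d → ℤ) : ℝ :=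
  ∑ t ∈ Finset.Ico (2 ^ Q.1 * Q.2 i) (2 ^ Q.1 * (Q.2 i + 1)),
    if shift (Function.update w i t) i ∈ cells Q then jump h (Function.update w i t, i) else 0

lemma sum_lineVar (h : (Fin d → ℤ) → ℝ) (Q : ℕ × (Fin d → ℤ)) (i : Fin d) :
    ∑ w ∈ cells Q, lineVar h Q i w =
      2 ^ Q.1 * ∑ w ∈ cells Q, if shift w i ∈ cells Q then jump h (w, i) else 0 :=
  sum_update_line Q i fun w => if shift w i ∈ cells Q then jump h (w, i) else 0

lemma sum_edges (h : (Fin d → ℤ) → ℝ) (Q : ℕ × (Fin d → ℤ)) :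
    ∑ e ∈ edges Q, jump h e =
      ∑ i, ∑ w ∈ cells Q, if shift w i ∈ cells Q then jump h (w, i) else 0 := by
  rw [edges, Finset.sum_filter, Finset.sum_product, Finset.sum_comm]

lemma abs_sub_le_lineVar (h : (Fin d → ℤ) → ℝ) {Q : ℕ × (Fin d → ℤ)} {w : Fin d → ℤ}
    (hw : w ∈ cells Q) (i : Fin d) {s t : ℤ}
    (hs : s ∈ Finset.Ico (2 ^ Q.1 * Q.2 i) (2 ^ Q.1 * (Q.2 i + 1)))
    (ht : t ∈ Finset.Ico (2 ^ Q.1 * Q.2 i) (2 ^ Q.1 * (Q.2 i + 1))) :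
    |h (Function.update w i s) - h (Function.update w i t)| ≤ lineVar h Q i w := by
  wlog hst : t ≤ s generalizing s t
  · rw [abs_sub_comm]; exact this ht hs (le_of_not_ge hst)
  refine (abs_sub_le_sum_Ico (fun r => h (Function.update w i r)) hst).trans ?_
  rw [Finset.mem_Ico] at hs ht
  calc _ = ∑ r ∈ Finset.Ico t s, if shift (Function.update w i r) i ∈ cells Q then
        jump h (Function.update w i r, i) else 0 := by
        refine Finset.sum_congr rfl fun r hr => ?_
        rw [Finset.mem_Ico] at hr
        have h1 : shift (Function.update w i r) i = Function.update w i (r + 1) := by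
          simp [shift]
        rw [if_pos, jump, h1]
        rw [h1, update_mem_cells hw, Finset.mem_Ico]
        omega
    _ ≤ _ := by
        refine Finset.sum_le_sum_of_subset_of_nonneg ?_ ?_
        · intro r hr
          rw [Finset.mem_Ico] at hr ⊢
          omega
        · intro r _ _
          split_ifs
          · exact jump_nonneg _ _
          · exact le_rfl

/-- Trace inequality on the slices of a cube. -/
lemma sum_slice_le (h : (Fin d → ℤ) → ℝ) (Q : ℕ × (Fin d → ℤ)) (i : Fin d) {a : ℤ}
    (ha : a ∈ Finset.Ico (2 ^ Q.1 * Q.2 i) (2 ^ Q.1 * (Q.2 i + 1))) :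
    2 ^ Q.1 * ∑ w ∈ cells Q, (if w i = a then h w else 0) ≤
      ∑ w ∈ cells Q, h w + 2 ^ Q.1 * ∑ e ∈ edges Q, jump h e := by
  have key : ∑ w ∈ cells Q, h (Function.update w i a) ≤
      ∑ w ∈ cells Q, (h w + lineVar h Q i w) := by
    refine Finset.sum_le_sum fun w hw => ?_
    have hwi : w i ∈ Finset.Ico (2 ^ Q.1 * Q.2 i) (2 ^ Q.1 * (Q.2 i + 1)) := by
      rw [← update_mem_cells hw i (t := w i)]; simpa using hw
    have := (abs_le.1 (abs_sub_le_lineVar h hw i ha hwi)).2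
    rw [Function.update_eq_self] at this
    linarith
  rw [Finset.sum_add_distrib, sum_lineVar] at key
  rw [← sum_update_line Q i]
  calc _ = ∑ w ∈ cells Q, h (Function.update w i a) := by
        refine Finset.sum_congr rfl fun w _ => ?_
        simp only [Function.update_self]
        rw [Finset.sum_ite_eq' _ a, if_pos ha]
    _ ≤ _ := key
    _ ≤ _ := by
        gcongr
        rw [sum_edges]
        refine Finset.single_le_sum (f := fun i => ∑ w ∈ cells Q,
          if shift w i ∈ cells Q then jump h (w, i) else 0) (fun j _ => ?_) (Finset.mem_univ i)
        refine Finset.sum_nonneg fun w _ => ?_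
        split_ifs
        · exact jump_nonneg _ _
        · exact le_rfl

/-- The first `n` coordinates of `z`, followed by the remaining coordinates of `x`. -/
def mix (n : ℕ) (x z : Fin d → ℤ) : Fin d → ℤ := fun j => if (j : ℕ) < n then z j else x j

lemma mix_mem {Q : ℕ × (Fin d → ℤ)} {x z : Fin d → ℤ} (hx : x ∈ cells Q) (hz : z ∈ cells Q)
    (n : ℕ) : mix n x z ∈ cells Q := by
  rw [mem_cells] at *
  intro i
  by_cases h : (i : ℕ) < n
  · simpa [mix, h] using hz i
  · simpa [mix, h] using hx i

lemma mix_mix (n : ℕ) (x z : Fin d → ℤ) : mix n (mix n x z) (mix n z x) = x := by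
  ext j
  by_cases h : (j : ℕ) < n <;> simp [mix, h]

lemma mix_succ {n : ℕ} (hn : n < d) (x z : Fin d → ℤ) :
    mix (n + 1) x z = Function.update (mix n x z) ⟨n, hn⟩ (mix n z x ⟨n, hn⟩) := by
  ext j
  by_cases h : j = ⟨n, hn⟩
  · subst h; simp [mix]
  · have h' : (j : ℕ) ≠ n := fun h' => h (Fin.ext h')
    rw [Function.update_of_ne h]
    simp only [mix]
    congr 1
    simp only [eq_iff_iff]
    omega

/-- Poincaré inequality on dyadic cubes. -/
lemma poincare (h : (Fin d → ℤ) → ℝ) (Q : ℕ × (Fin d → ℤ)) :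
    ∑ x ∈ cells Q, ∑ z ∈ cells Q, |h x - h z| ≤
      (cells Q).card * 2 ^ Q.1 * ∑ e ∈ edges Q, jump h e := by
  have hstep : ∀ n (hn : n < d), ∑ p ∈ cells Q ×ˢ cells Q,
      |h (mix (n + 1) p.1 p.2) - h (mix n p.1 p.2)| ≤ (cells Q).card * (2 ^ Q.1 *
        ∑ w ∈ cells Q, if shift w ⟨n, hn⟩ ∈ cells Q then jump h (w, ⟨n, hn⟩) else 0) := by
    intro n hn
    calc _ = ∑ p ∈ cells Q ×ˢ cells Q,
          |h (Function.update p.1 ⟨n, hn⟩ (p.2 ⟨n, hn⟩)) - h p.1| := by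
          refine Finset.sum_nbij' (fun p => (mix n p.1 p.2, mix n p.2 p.1))
            (fun p => (mix n p.1 p.2, mix n p.2 p.1)) ?_ ?_ ?_ ?_ ?_
          · rintro ⟨x, z⟩ hp
            rw [Finset.mem_product] at hp ⊢
            exact ⟨mix_mem hp.1 hp.2 n, mix_mem hp.2 hp.1 n⟩
          · rintro ⟨x, z⟩ hp
            rw [Finset.mem_product] at hp ⊢
            exact ⟨mix_mem hp.1 hp.2 n, mix_mem hp.2 hp.1 n⟩
          · rintro ⟨x, z⟩ -
            simp [mix_mix]
          · rintro ⟨x, z⟩ -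
            simp [mix_mix]
          · rintro ⟨x, z⟩ -
            simp only [mix_succ hn]
      _ ≤ ∑ p ∈ cells Q ×ˢ cells Q, lineVar h Q ⟨n, hn⟩ p.1 := by
          refine Finset.sum_le_sum fun p hp => ?_
          rw [Finset.mem_product] at hp
          have hco : ∀ w ∈ cells Q, w ⟨n, hn⟩ ∈ Finset.Ico (2 ^ Q.1 * Q.2 ⟨n, hn⟩)
              (2 ^ Q.1 * (Q.2 ⟨n, hn⟩ + 1)) := fun w hw => by
            rw [← update_mem_cells hw ⟨n, hn⟩ (t := w ⟨n, hn⟩)]; simpa using hw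
          have := abs_sub_le_lineVar h hp.1 ⟨n, hn⟩ (hco _ hp.2) (hco _ hp.1)
          rwa [Function.update_eq_self] at this
      _ = _ := by
          rw [Finset.sum_product_right, ← sum_lineVar]
          simp
  have htel : ∀ p ∈ cells Q ×ˢ cells Q, |h p.1 - h p.2| ≤
      ∑ n ∈ Finset.range d, |h (mix (n + 1) p.1 p.2) - h (mix n p.1 p.2)| := by
    rintro ⟨x, z⟩ -
    have h0 : mix 0 x z = x := by ext; simp [mix]
    have hd : mix d x z = z := by ext; simp [mix]
    have := Finset.sum_range_sub (fun n => h (mix n x z)) d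
    rw [h0, hd] at this
    rw [abs_sub_comm, ← this]
    exact Finset.abs_sum_le_sum_abs _ _
  calc _ = ∑ p ∈ cells Q ×ˢ cells Q, |h p.1 - h p.2| := by rw [Finset.sum_product]
    _ ≤ ∑ n ∈ Finset.range d, ∑ p ∈ cells Q ×ˢ cells Q,
        |h (mix (n + 1) p.1 p.2) - h (mix n p.1 p.2)| := by
        rw [Finset.sum_comm]; exact Finset.sum_le_sum htel
    _ = ∑ i : Fin d, ∑ p ∈ cells Q ×ˢ cells Q,
        |h (mix (i + 1) p.1 p.2) - h (mix i p.1 p.2)| :=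
        (Fin.sum_univ_eq_sum_range (fun n => ∑ p ∈ cells Q ×ˢ cells Q,
          |h (mix (n + 1) p.1 p.2) - h (mix n p.1 p.2)|) d).symm
    _ ≤ ∑ i : Fin d, (cells Q).card * (2 ^ Q.1 *
        ∑ w ∈ cells Q, if shift w i ∈ cells Q then jump h (w, i) else 0) :=
        Finset.sum_le_sum fun i _ => hstep i i.2
    _ = _ := by
        rw [sum_edges, ← Finset.mul_sum, ← Finset.mul_sum, mul_assoc]

/-! ### Superlevel sets on cubes -/

/-- The indicator function of the superlevel set `{F > μ}`. -/
def lev (F : (Fin d → ℤ) → ℝ) (μ : ℝ) (x : Fin d → ℤ) : ℝ := if μ < F x then 1 else 0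

/-- The number of cells of `Q` in the superlevel set `{F > μ}`. -/
def cnt (F : (Fin d → ℤ) → ℝ) (μ : ℝ) (Q : ℕ × (Fin d → ℤ)) : ℝ := ∑ x ∈ cells Q, lev F μ x

/-- The perimeter of `{F > μ}` inside `Q`. -/
def per (F : (Fin d → ℤ) → ℝ) (μ : ℝ) (Q : ℕ × (Fin d → ℤ)) : ℝ :=
  ∑ e ∈ edges Q, jump (lev F μ) e

/-- The average of `F` over the cube `Q`. -/
def avg (F : (Fin d → ℤ) → ℝ) (Q : ℕ × (Fin d → ℤ)) : ℝ :=
  (∑ x ∈ cells Q, F x) / (cells Q).card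

lemma lev_nonneg (F : (Fin d → ℤ) → ℝ) (μ : ℝ) (x : Fin d → ℤ) : 0 ≤ lev F μ x := by
  unfold lev; split_ifs <;> norm_num

lemma lev_le_one (F : (Fin d → ℤ) → ℝ) (μ : ℝ) (x : Fin d → ℤ) : lev F μ x ≤ 1 := by
  unfold lev; split_ifs <;> norm_num

lemma cnt_nonneg (F : (Fin d → ℤ) → ℝ) (μ : ℝ) (Q : ℕ × (Fin d → ℤ)) : 0 ≤ cnt F μ Q :=
  Finset.sum_nonneg fun _ _ => lev_nonneg _ _ _

lemma cnt_le_card (F : (Fin d → ℤ) → ℝ) (μ : ℝ) (Q : ℕ × (Fin d → ℤ)) :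
    cnt F μ Q ≤ (cells Q).card := by
  have := Finset.sum_le_sum fun x (_ : x ∈ cells Q) => lev_le_one F μ x
  simpa [cnt] using this

lemma per_nonneg (F : (Fin d → ℤ) → ℝ) (μ : ℝ) (Q : ℕ × (Fin d → ℤ)) : 0 ≤ per F μ Q :=
  Finset.sum_nonneg fun _ _ => jump_nonneg _ _

lemma isoperimetric (F : (Fin d → ℤ) → ℝ) (μ : ℝ) (Q : ℕ × (Fin d → ℤ)) :
    cnt F μ Q * ((cells Q).card - cnt F μ Q) ≤ (cells Q).card * (2 ^ Q.1 * per F μ Q) := by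
  have h := poincare (lev F μ) Q
  rw [mul_assoc] at h
  refine le_trans ?_ h
  have h1 : ((cells Q).card : ℝ) - cnt F μ Q = ∑ z ∈ cells Q, (1 - lev F μ z) := by
    rw [Finset.sum_sub_distrib]; simp [cnt]
  rw [h1, cnt, Finset.sum_mul_sum]
  refine Finset.sum_le_sum fun x _ => Finset.sum_le_sum fun z _ => ?_
  unfold lev
  split_ifs <;> norm_num

lemma cnt_le_of_low {F : (Fin d → ℤ) → ℝ} {μ : ℝ} {Q : ℕ × (Fin d → ℤ)}
    (h : 2 * cnt F μ Q ≤ (cells Q).card) : cnt F μ Q ≤ 2 * (2 ^ Q.1 * per F μ Q) := by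
  have h1 := isoperimetric F μ Q
  have h2 := card_cells_pos Q
  refine le_of_mul_le_mul_left ?_ h2
  nlinarith [cnt_nonneg F μ Q]

lemma sub_cnt_le_of_high {F : (Fin d → ℤ) → ℝ} {μ c : ℝ} {Q : ℕ × (Fin d → ℤ)}
    (h : c * (cells Q).card ≤ cnt F μ Q) :
    c * ((cells Q).card - cnt F μ Q) ≤ 2 ^ Q.1 * per F μ Q := by
  have h1 := isoperimetric F μ Q
  have h2 := card_cells_pos Q
  refine le_of_mul_le_mul_left ?_ h2
  nlinarith [cnt_le_card F μ Q]

lemma sum_slice_compl_le (F : (Fin d → ℤ) → ℝ) (μ : ℝ) (Q : ℕ × (Fin d → ℤ)) (i : Fin d) {a : ℤ}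
    (ha : a ∈ Finset.Ico (2 ^ Q.1 * Q.2 i) (2 ^ Q.1 * (Q.2 i + 1))) :
    ∑ w ∈ cells Q, (if w i = a then 1 - lev F μ w else 0) ≤
      ((cells Q).card - cnt F μ Q) / 2 ^ Q.1 + per F μ Q := by
  have h := sum_slice_le (fun w => 1 - lev F μ w) Q i ha
  have h1 : ((cells Q).card : ℝ) - cnt F μ Q = ∑ z ∈ cells Q, (1 - lev F μ z) := by
    rw [Finset.sum_sub_distrib]; simp [cnt]
  have h2 : ∑ e ∈ edges Q, jump (fun w => 1 - lev F μ w) e = per F μ Q := by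
    refine Finset.sum_congr rfl fun e _ => ?_
    simp only [jump]
    rw [abs_sub_comm]
    congr 1
    ring
  rw [h2, ← h1] at h
  rw [div_add' _ _ _ (by positivity), le_div_iff₀ (by positivity)]
  linarith

/-- Cubes sharing a cell are nested, so a family of pairwise non-nested cubes has disjoint edge
sets. -/
lemma sum_edges_le {𝒞 : Finset (ℕ × (Fin d → ℤ))} {𝓔 : Finset ((Fin d → ℤ) × Fin d)}
    (h𝓔 : ∀ Q ∈ 𝒞, edges Q ⊆ 𝓔)
    (hdisj : ∀ P ∈ 𝒞, ∀ Q ∈ 𝒞, P.1 < Q.1 → ¬ cells P ⊆ cells Q)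
    {g : (Fin d → ℤ) × Fin d → ℝ} (hg : ∀ e, 0 ≤ g e) :
    ∑ Q ∈ 𝒞, ∑ e ∈ edges Q, g e ≤ ∑ e ∈ 𝓔, g e := by
  rw [← Finset.sum_biUnion]
  · exact Finset.sum_le_sum_of_subset_of_nonneg (Finset.biUnion_subset.2 h𝓔) fun e _ _ => hg e
  · intro P hP Q hQ hPQ
    simp only [Function.onFun]
    rw [Finset.disjoint_left]
    intro e heP heQ
    rw [mem_edges] at heP heQ
    rcases lt_trichotomy P.1 Q.1 with h | h | h
    · exact hdisj P hP Q hQ h (cells_subset heP.1 heQ.1 h.le)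
    · exact hPQ (eq_of_mem_cells heP.1 heQ.1 h)
    · exact hdisj Q hQ P hP h (cells_subset heQ.1 heP.1 h.le)

lemma shift_mem_cells {Q : ℕ × (Fin d → ℤ)} {w : Fin d → ℤ} (hw : w ∈ cells Q) (i : Fin d) :
    shift w i ∈ cells Q ↔ w i ≠ 2 ^ Q.1 * (Q.2 i + 1) - 1 := by
  have h := (mem_cells.1 hw) i
  rw [shift, update_mem_cells hw, Finset.mem_Ico]
  omega

lemma mem_cells_of_shift {Q : ℕ × (Fin d → ℤ)} {w : Fin d → ℤ} {i : Fin d}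
    (hw : shift w i ∈ cells Q) (hi : shift w i i ≠ 2 ^ Q.1 * Q.2 i) : w ∈ cells Q := by
  have h := (mem_cells.1 hw) i
  have : w = Function.update (shift w i) i (w i) := by simp [shift]
  rw [this, update_mem_cells hw, Finset.mem_Ico]
  simp only [shift, Function.update_self] at h hi
  omega

lemma shift_injective :
    Function.Injective fun e : (Fin d → ℤ) × Fin d => (shift e.1 e.2, e.2) := by
  rintro ⟨x, i⟩ ⟨y, j⟩ h
  simp only [Prod.mk.injEq] at h
  obtain ⟨h, rfl⟩ := h
  have hx : x = Function.update (shift x i) i (shift x i i - 1) := by simp [shift]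
  have hy : y = Function.update (shift y i) i (shift y i i - 1) := by simp [shift]
  rw [Prod.mk.injEq]
  exact ⟨by rw [hx, hy, h], rfl⟩

/-- The members of `𝒬` with average above `μ` that are maximal with this property. -/
def maxFam (𝒬 : Finset (ℕ × (Fin d → ℤ))) (F : (Fin d → ℤ) → ℝ) (μ : ℝ) :
    Finset (ℕ × (Fin d → ℤ)) := by
  classical
  exact 𝒬.filter fun Q => μ < avg F Q ∧
    ∀ T ∈ 𝒬, Q.1 < T.1 → cells Q ⊆ cells T → avg F T ≤ μ

lemma mem_maxFam {𝒬 : Finset (ℕ × (Fin d → ℤ))} {F : (Fin d → ℤ) → ℝ} {μ : ℝ}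
    {Q : ℕ × (Fin d → ℤ)} : Q ∈ maxFam 𝒬 F μ ↔ Q ∈ 𝒬 ∧ μ < avg F Q ∧
      ∀ T ∈ 𝒬, Q.1 < T.1 → cells Q ⊆ cells T → avg F T ≤ μ := by
  simp [maxFam]

lemma exists_mem_maxFam {𝒬 : Finset (ℕ × (Fin d → ℤ))} {F : (Fin d → ℤ) → ℝ} {μ : ℝ}
    {Q : ℕ × (Fin d → ℤ)} (hQ : Q ∈ 𝒬) (hμ : μ < avg F Q) {x : Fin d → ℤ} (hx : x ∈ cells Q) :
    ∃ P ∈ maxFam 𝒬 F μ, x ∈ cells P := by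
  classical
  obtain ⟨P, hP, hmax⟩ := Finset.exists_max_image
    (𝒬.filter fun P => μ < avg F P ∧ x ∈ cells P) Prod.fst ⟨Q, by simp [hQ, hμ, hx]⟩
  rw [Finset.mem_filter] at hP
  refine ⟨P, mem_maxFam.2 ⟨hP.1, hP.2.1, fun T hT hlt hsub => ?_⟩, hP.2.2⟩
  by_contra! h
  have := hmax T (by simp [hT, h, hsub hP.2.2])
  omega

/-- `M` is the maximum of `F` and the averages over cubes in `𝒬`. -/
def IsMaxFun (𝒬 : Finset (ℕ × (Fin d → ℤ))) (F M : (Fin d → ℤ) → ℝ) : Prop :=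
  ∀ x μ, μ < M x ↔ μ < F x ∨ ∃ Q ∈ 𝒬, x ∈ cells Q ∧ μ < avg F Q

lemma jump_lev_max_le {𝒬 : Finset (ℕ × (Fin d → ℤ))} {F M : (Fin d → ℤ) → ℝ}
    (hM : IsMaxFun 𝒬 F M) (μ : ℝ) (e : (Fin d → ℤ) × Fin d) :
    jump (lev M μ) e ≤ jump (lev F μ) e +
      (∑ Q ∈ maxFam 𝒬 F μ, if e.1 ∈ cells Q ∧ shift e.1 e.2 ∉ cells Q
        then 1 - lev F μ e.1 else 0) +
      ∑ Q ∈ maxFam 𝒬 F μ, if shift e.1 e.2 ∈ cells Q ∧ e.1 ∉ cells Q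
        then 1 - lev F μ (shift e.1 e.2) else 0 := by
  obtain ⟨x, i⟩ := e
  simp only [jump]
  generalize shift x i = y
  have hnn : ∀ x y : Fin d → ℤ, ∀ Q ∈ maxFam 𝒬 F μ,
      0 ≤ if x ∈ cells Q ∧ y ∉ cells Q then 1 - lev F μ x else 0 := by
    intro x y Q _
    split_ifs
    · linarith [lev_le_one F μ x]
    · exact le_rfl
  have key : ∀ x y : Fin d → ℤ, μ < M x → ¬ μ < M y → |lev M μ y - lev M μ x| ≤
      |lev F μ y - lev F μ x| +
        ∑ Q ∈ maxFam 𝒬 F μ, if x ∈ cells Q ∧ y ∉ cells Q then 1 - lev F μ x else 0 := by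
    intro x y hx hy
    have hFy : ¬ μ < F y := fun h => hy ((hM y μ).2 (Or.inl h))
    by_cases hFx : μ < F x
    · have := Finset.sum_nonneg (hnn x y)
      simp only [lev, if_pos hx, if_neg hy, if_pos hFx, if_neg hFy] at this ⊢
      norm_num at this ⊢
    · obtain ⟨Q, hQ, hxQ, hQμ⟩ := ((hM x μ).1 hx).resolve_left hFx
      obtain ⟨P, hP, hxP⟩ := exists_mem_maxFam hQ hQμ hxQ
      have hyP : y ∉ cells P := fun h => hy ((hM y μ).2
        (Or.inr ⟨P, (mem_maxFam.1 hP).1, h, (mem_maxFam.1 hP).2.1⟩))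
      have := Finset.single_le_sum (hnn x y) hP
      rw [if_pos ⟨hxP, hyP⟩] at this
      simp only [lev, if_pos hx, if_neg hy, if_neg hFx, if_neg hFy] at this ⊢
      norm_num at this ⊢
      exact this
  have h1 := Finset.sum_nonneg (hnn x y)
  have h2 := Finset.sum_nonneg (hnn y x)
  by_cases hx : μ < M x <;> by_cases hy : μ < M y
  · have : |lev M μ y - lev M μ x| = 0 := by simp [lev, hx, hy]
    rw [this]; positivity
  · linarith [key x y hx hy]
  · have := key y x hy hx
    rw [abs_sub_comm, abs_sub_comm (lev F μ x)] at this
    linarith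
  · have : |lev M μ y - lev M μ x| = 0 := by simp [lev, hx, hy]
    rw [this]; positivity

lemma sum_boundary_le (F : (Fin d → ℤ) → ℝ) (μ : ℝ) (Q : ℕ × (Fin d → ℤ))
    (𝓔 : Finset ((Fin d → ℤ) × Fin d)) :
    (∑ e ∈ 𝓔, if e.1 ∈ cells Q ∧ shift e.1 e.2 ∉ cells Q then 1 - lev F μ e.1 else 0) +
      (∑ e ∈ 𝓔, if shift e.1 e.2 ∈ cells Q ∧ e.1 ∉ cells Q
        then 1 - lev F μ (shift e.1 e.2) else 0) ≤
      2 * d * (((cells Q).card - cnt F μ Q) / 2 ^ Q.1 + per F μ Q) := by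
  classical
  have hpow : (0 : ℤ) < 2 ^ Q.1 := by positivity
  have hlev : ∀ w, 0 ≤ 1 - lev F μ w := fun w => by linarith [lev_le_one F μ w]
  have hface : ∀ a : Fin d → ℤ, (∀ i, a i ∈ Finset.Ico (2 ^ Q.1 * Q.2 i) (2 ^ Q.1 * (Q.2 i + 1))) →
      ∑ e ∈ cells Q ×ˢ (Finset.univ : Finset (Fin d)),
        (if e.1 e.2 = a e.2 then 1 - lev F μ e.1 else 0) ≤
      d * (((cells Q).card - cnt F μ Q) / 2 ^ Q.1 + per F μ Q) := by
    intro a ha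
    rw [Finset.sum_product_right]
    have := Finset.sum_le_sum fun i (_ : i ∈ Finset.univ) => sum_slice_compl_le F μ Q i (ha i)
    rwa [Finset.sum_const, Finset.card_univ, Fintype.card_fin, nsmul_eq_mul] at this
  have hA : (∑ e ∈ 𝓔, if e.1 ∈ cells Q ∧ shift e.1 e.2 ∉ cells Q then 1 - lev F μ e.1 else 0) ≤
      d * (((cells Q).card - cnt F μ Q) / 2 ^ Q.1 + per F μ Q) := by
    refine le_trans ?_ (hface (fun i => 2 ^ Q.1 * (Q.2 i + 1) - 1) fun i => ?_)
    · rw [← Finset.sum_filter, ← Finset.sum_filter]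
      refine Finset.sum_le_sum_of_subset_of_nonneg ?_ fun e _ _ => hlev _
      rintro ⟨w, i⟩ he
      simp only [Finset.mem_filter, Finset.mem_product, Finset.mem_univ, and_true] at he ⊢
      refine ⟨he.2.1, ?_⟩
      have := he.2.2
      rw [shift_mem_cells he.2.1] at this
      exact not_not.1 this
    · rw [Finset.mem_Ico]
      constructor <;> linarith
  have hB : (∑ e ∈ 𝓔, if shift e.1 e.2 ∈ cells Q ∧ e.1 ∉ cells Q
        then 1 - lev F μ (shift e.1 e.2) else 0) ≤
      d * (((cells Q).card - cnt F μ Q) / 2 ^ Q.1 + per F μ Q) := by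
    refine le_trans ?_ (hface (fun i => 2 ^ Q.1 * Q.2 i) fun i => ?_)
    · rw [← Finset.sum_filter, ← Finset.sum_filter]
      rw [← Finset.sum_image (f := fun e : (Fin d → ℤ) × Fin d => 1 - lev F μ e.1)
        (g := fun e : (Fin d → ℤ) × Fin d => (shift e.1 e.2, e.2)) shift_injective.injOn]
      refine Finset.sum_le_sum_of_subset_of_nonneg ?_ fun e _ _ => hlev _
      rintro ⟨w, i⟩ he
      simp only [Finset.mem_image, Finset.mem_filter, Finset.mem_product, Finset.mem_univ,
        and_true] at he ⊢
      obtain ⟨⟨v, j⟩, hv, heq⟩ := he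
      simp only [Prod.mk.injEq] at heq
      obtain ⟨rfl, rfl⟩ := heq
      refine ⟨hv.2.1, ?_⟩
      by_contra hne
      exact hv.2.2 (mem_cells_of_shift hv.2.1 hne)
    · rw [Finset.mem_Ico]
      constructor <;> linarith
  linarith

/-- At a fixed level, the perimeter of `{M > μ}` is controlled by that of `{F > μ}` and the
surface of the maximal cubes in which `{F > μ}` has low density. -/
lemma sum_jump_lev_max_le {𝒬 : Finset (ℕ × (Fin d → ℤ))} {F M : (Fin d → ℤ) → ℝ}
    (hM : IsMaxFun 𝒬 F M) (μ : ℝ) {𝓔 : Finset ((Fin d → ℤ) × Fin d)}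
    (h𝓔 : ∀ Q ∈ 𝒬, edges Q ⊆ 𝓔) {c : ℝ} (hc : 0 < c) :
    ∑ e ∈ 𝓔, jump (lev M μ) e ≤ (1 + 2 * d * (1 + c⁻¹)) * ∑ e ∈ 𝓔, jump (lev F μ) e +
      2 * d * ∑ Q ∈ maxFam 𝒬 F μ,
        if cnt F μ Q < c * (cells Q).card then (cells Q).card / (2 : ℝ) ^ Q.1 else 0 := by
  have h1 := Finset.sum_le_sum fun e (_ : e ∈ 𝓔) => jump_lev_max_le hM μ e
  rw [Finset.sum_add_distrib, Finset.sum_add_distrib, Finset.sum_comm (s := 𝓔),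
    Finset.sum_comm (s := 𝓔), add_assoc, ← Finset.sum_add_distrib] at h1
  have h2 := Finset.sum_le_sum fun Q (_ : Q ∈ maxFam 𝒬 F μ) => sum_boundary_le F μ Q 𝓔
  have h3 : ∀ Q ∈ maxFam 𝒬 F μ,
      2 * d * (((cells Q).card - cnt F μ Q) / 2 ^ Q.1 + per F μ Q) ≤
        2 * d * (1 + c⁻¹) * per F μ Q +
        2 * d * if cnt F μ Q < c * (cells Q).card then (cells Q).card / (2 : ℝ) ^ Q.1 else 0 := by
    intro Q _
    have hp := per_nonneg F μ Q
    rw [mul_assoc (2 * (d : ℝ)) (1 + c⁻¹), ← mul_add]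
    refine mul_le_mul_of_nonneg_left ?_ (by positivity)
    split_ifs with h
    · have : ((cells Q).card - cnt F μ Q) / (2 : ℝ) ^ Q.1 ≤ (cells Q).card / (2 : ℝ) ^ Q.1 := by
        gcongr; linarith [cnt_nonneg F μ Q]
      have : 0 ≤ c⁻¹ * per F μ Q := by positivity
      linarith
    · have h4 := sub_cnt_le_of_high (not_lt.1 h)
      have : ((cells Q).card - cnt F μ Q) / (2 : ℝ) ^ Q.1 ≤ c⁻¹ * per F μ Q := by
        rw [div_le_iff₀ (by positivity), mul_assoc, ← div_eq_inv_mul, le_div_iff₀ hc]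
        linarith
      linarith
  have h5 := Finset.sum_le_sum h3
  rw [← Finset.mul_sum] at h2
  rw [Finset.sum_add_distrib, ← Finset.mul_sum, ← Finset.mul_sum, ← Finset.mul_sum] at h5
  have h6 : ∑ Q ∈ maxFam 𝒬 F μ, per F μ Q ≤ ∑ e ∈ 𝓔, jump (lev F μ) e := by
    refine sum_edges_le (fun Q hQ => h𝓔 Q (mem_maxFam.1 hQ).1) ?_ fun e => jump_nonneg _ _
    intro P hP Q hQ hlt hsub
    rw [mem_maxFam] at hP hQ
    linarith [hP.2.2 Q hQ.1 hlt hsub, hQ.2.1]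
  have h7 : 2 * d * (1 + c⁻¹) * ∑ Q ∈ maxFam 𝒬 F μ, per F μ Q ≤
      2 * d * (1 + c⁻¹) * ∑ e ∈ 𝓔, jump (lev F μ) e := by gcongr
  linarith

/-! ### Stopping cubes -/

/-- The dyadic cubes contained in `Q`. -/
def subcubes (Q : ℕ × (Fin d → ℤ)) : Finset (ℕ × (Fin d → ℤ)) :=
  (Finset.range (Q.1 + 1)).biUnion fun j => (cells Q).image fun x => (j, anc j x)

lemma mem_subcubes {P Q : ℕ × (Fin d → ℤ)} :
    P ∈ subcubes Q ↔ P.1 ≤ Q.1 ∧ cells P ⊆ cells Q := by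
  simp only [subcubes, Finset.mem_biUnion, Finset.mem_range, Finset.mem_image, Nat.lt_succ_iff]
  constructor
  · rintro ⟨j, hj, x, hx, rfl⟩
    exact ⟨hj, cells_subset (mem_cells_anc j x) hx hj⟩
  · rintro ⟨h, hsub⟩
    obtain ⟨x, hx⟩ := cells_nonempty P
    exact ⟨P.1, h, x, hsub hx, Prod.ext rfl (mem_cells_iff_anc.1 hx)⟩

lemma pairwiseDisjoint_cells {𝒞 : Finset (ℕ × (Fin d → ℤ))}
    (hdisj : ∀ P ∈ 𝒞, ∀ Q ∈ 𝒞, P.1 < Q.1 → ¬ cells P ⊆ cells Q) :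
    (𝒞 : Set (ℕ × (Fin d → ℤ))).PairwiseDisjoint cells := by
  intro P hP Q hQ hPQ
  simp only [Function.onFun]
  rw [Finset.disjoint_left]
  intro x hxP hxQ
  rcases lt_trichotomy P.1 Q.1 with h | h | h
  · exact hdisj P hP Q hQ h (cells_subset hxP hxQ h.le)
  · exact hPQ (eq_of_mem_cells hxP hxQ h)
  · exact hdisj Q hQ P hP h (cells_subset hxQ hxP h.le)

/-- The number of cells of `P` in `{F ≥ a}`. -/
def cntGe (F : (Fin d → ℤ) → ℝ) (a : ℝ) (P : ℕ × (Fin d → ℤ)) : ℝ :=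
  ∑ x ∈ cells P, if a ≤ F x then 1 else 0

lemma cntGe_le_cnt (F : (Fin d → ℤ) → ℝ) {μ a : ℝ} (h : μ < a) (P : ℕ × (Fin d → ℤ)) :
    cntGe F a P ≤ cnt F μ P := by
  refine Finset.sum_le_sum fun x _ => ?_
  unfold lev
  split_ifs <;> linarith

lemma cnt_le_cntGe (F : (Fin d → ℤ) → ℝ) {μ a : ℝ} (h : a ≤ μ) (P : ℕ × (Fin d → ℤ)) :
    cnt F μ P ≤ cntGe F a P := by
  refine Finset.sum_le_sum fun x _ => ?_
  unfold lev
  split_ifs <;> linarith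

/-- The density threshold of the stopping time. -/
def thr (d : ℕ) : ℝ := (2 ^ (d + 1))⁻¹

lemma thr_pos (d : ℕ) : 0 < thr d := by unfold thr; positivity

lemma thr_le (d : ℕ) : thr d ≤ 1 / 2 := by
  unfold thr
  rw [one_div]
  refine inv_anti₀ (by norm_num) ?_
  calc (2 : ℝ) = 2 ^ 1 := by norm_num
    _ ≤ 2 ^ (d + 1) := pow_le_pow_right₀ (by norm_num) (by omega)

/-- `P` is dense relative to `Q` if both the superlevel set at the average over `Q`, and the one
at the midpoint of the averages over `P` and `Q`, fill a fixed proportion of `P`. -/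
def IsDense (F : (Fin d → ℤ) → ℝ) (Q P : ℕ × (Fin d → ℤ)) : Prop :=
  thr d * (cells P).card ≤ cntGe F (avg F Q) P ∧
    thr d * (cells P).card ≤ cntGe F ((avg F P + avg F Q) / 2) P

/-- The maximal subcubes of `Q` which are dense relative to `Q`. -/
def denseFam (F : (Fin d → ℤ) → ℝ) (Q : ℕ × (Fin d → ℤ)) : Finset (ℕ × (Fin d → ℤ)) := by
  classical
  exact (subcubes Q).filter fun P => IsDense F Q P ∧
    ∀ T ∈ subcubes Q, P.1 < T.1 → cells P ⊆ cells T → ¬ IsDense F Q T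

lemma mem_denseFam {F : (Fin d → ℤ) → ℝ} {P Q : ℕ × (Fin d → ℤ)} :
    P ∈ denseFam F Q ↔ P ∈ subcubes Q ∧ IsDense F Q P ∧
      ∀ T ∈ subcubes Q, P.1 < T.1 → cells P ⊆ cells T → ¬ IsDense F Q T := by
  simp [denseFam]

lemma denseFam_disjoint (F : (Fin d → ℤ) → ℝ) (Q : ℕ × (Fin d → ℤ)) :
    (denseFam F Q : Set (ℕ × (Fin d → ℤ))).PairwiseDisjoint cells :=
  pairwiseDisjoint_cells fun _ hP R hR hlt hsub =>
    (mem_denseFam.1 hP).2.2 R (mem_denseFam.1 hR).1 hlt hsub (mem_denseFam.1 hR).2.1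

lemma cells_zero (x : Fin d → ℤ) : cells (0, x) = {x} := by
  ext y
  rw [mem_cells_iff_anc, Finset.mem_singleton]
  have : anc 0 y = y := by ext; simp [anc]
  rw [this]

lemma exists_mem_denseFam {F : (Fin d → ℤ) → ℝ} {Q : ℕ × (Fin d → ℤ)} {x : Fin d → ℤ}
    (hx : x ∈ cells Q) (h : avg F Q ≤ F x) : ∃ P ∈ denseFam F Q, x ∈ cells P := by
  classical
  have havg : avg F (0, x) = F x := by simp [avg, cells_zero]
  have h0 : (0, x) ∈ subcubes Q := mem_subcubes.2 ⟨Nat.zero_le _, by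
    rw [cells_zero]; simpa using hx⟩
  have hd : IsDense F Q (0, x) := by
    have h1 : (avg F (0, x) + avg F Q) / 2 ≤ F x := by rw [havg]; linarith
    have := thr_le d
    refine ⟨?_, ?_⟩
    · simp only [cntGe, cells_zero, Finset.sum_singleton, Finset.card_singleton, if_pos h]
      norm_num; linarith
    · rw [cntGe, cells_zero, Finset.sum_singleton, Finset.card_singleton, if_pos h1]
      norm_num; linarith
  obtain ⟨P, hP, hmax⟩ := Finset.exists_max_image
    ((subcubes Q).filter fun P => IsDense F Q P ∧ x ∈ cells P) Prod.fst
    ⟨(0, x), by simp [h0, hd, cells_zero]⟩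
  rw [Finset.mem_filter] at hP
  refine ⟨P, mem_denseFam.2 ⟨hP.1, hP.2.1, fun T hT hlt hsub hdT => ?_⟩, hP.2.2⟩
  have := hmax T (by simp [hT, hdT, hsub hP.2.2])
  omega

lemma card_mul_avg (F : (Fin d → ℤ) → ℝ) (Q : ℕ × (Fin d → ℤ)) :
    (cells Q).card * avg F Q = ∑ x ∈ cells Q, F x := by
  rw [avg, mul_div_cancel₀]
  exact (ne_of_gt (card_cells_pos Q))

/-- If `F` exceeds a level `a` below its average over `Q` only on a small part of `Q`, then the
excess of the average is witnessed by the dense subcubes. -/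
lemma excess_le (F : (Fin d → ℤ) → ℝ) {Q : ℕ × (Fin d → ℤ)} {a : ℝ} (ha : a < avg F Q)
    (hlow : cnt F a Q < thr d / 4 * (cells Q).card) :
    (avg F Q - a) * (cells Q).card ≤
      2 * ∑ P ∈ denseFam F Q, max (avg F P - avg F Q) 0 * (cells P).card := by
  classical
  set U := (denseFam F Q).biUnion cells with hU
  have hUQ : U ⊆ cells Q := Finset.biUnion_subset.2 fun P hP =>
    (mem_subcubes.1 (mem_denseFam.1 hP).1).2
  have hcntU : (U.card : ℝ) * thr d ≤ cnt F a Q := by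
    rw [hU, Finset.card_biUnion (denseFam_disjoint F Q)]
    push_cast
    rw [Finset.sum_mul]
    calc ∑ P ∈ denseFam F Q, ((cells P).card : ℝ) * thr d
        ≤ ∑ P ∈ denseFam F Q, ∑ x ∈ cells P, lev F a x := by
          refine Finset.sum_le_sum fun P hP => ?_
          rw [mul_comm]
          exact (mem_denseFam.1 hP).2.1.1.trans (cntGe_le_cnt F ha P)
      _ = ∑ x ∈ U, lev F a x := (Finset.sum_biUnion (denseFam_disjoint F Q)).symm
      _ ≤ cnt F a Q := Finset.sum_le_sum_of_subset_of_nonneg hUQ fun _ _ _ => lev_nonneg _ _ _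
  have hcardU : (U.card : ℝ) ≤ (cells Q).card / 4 := by
    have := thr_pos d
    refine le_of_mul_le_mul_right ?_ this
    linarith
  have hsum : ∑ x ∈ cells Q, (F x - a) = (avg F Q - a) * (cells Q).card := by
    rw [Finset.sum_sub_distrib, ← card_mul_avg]; simp; ring
  have hout : ∑ x ∈ cells Q \ U, (F x - a) ≤ (avg F Q - a) * cnt F a Q := by
    calc ∑ x ∈ cells Q \ U, (F x - a) ≤ ∑ x ∈ cells Q \ U, (avg F Q - a) * lev F a x := by
          refine Finset.sum_le_sum fun x hx => ?_
          rw [Finset.mem_sdiff] at hx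
          have h1 : F x < avg F Q := by
            by_contra! h
            obtain ⟨P, hP, hxP⟩ := exists_mem_denseFam hx.1 h
            exact hx.2 (Finset.mem_biUnion.2 ⟨P, hP, hxP⟩)
          unfold lev
          split_ifs <;> linarith
      _ ≤ ∑ x ∈ cells Q, (avg F Q - a) * lev F a x :=
          Finset.sum_le_sum_of_subset_of_nonneg Finset.sdiff_subset fun x _ _ =>
            mul_nonneg (by linarith) (lev_nonneg _ _ _)
      _ = _ := by rw [← Finset.mul_sum]; rfl
  have hin : ∑ x ∈ U, (F x - a) ≤ (avg F Q - a) * U.card +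
      ∑ P ∈ denseFam F Q, max (avg F P - avg F Q) 0 * (cells P).card := by
    have h1 : ∑ x ∈ U, (F x - a) = (avg F Q - a) * U.card + ∑ x ∈ U, (F x - avg F Q) := by
      simp only [Finset.sum_sub_distrib, Finset.sum_const, nsmul_eq_mul]; ring
    rw [h1, add_le_add_iff_left, hU, Finset.sum_biUnion (denseFam_disjoint F Q)]
    refine Finset.sum_le_sum fun P _ => ?_
    have h2 : ∑ x ∈ cells P, (F x - avg F Q) = (avg F P - avg F Q) * (cells P).card := by
      rw [Finset.sum_sub_distrib, ← card_mul_avg]; simp; ring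
    rw [h2]
    gcongr
    exact le_max_left _ _
  have hsplit := Finset.sum_sdiff (f := fun x => F x - a) hUQ
  have h3 : (avg F Q - a) * cnt F a Q ≤ (avg F Q - a) * ((cells Q).card / 4) := by
    refine mul_le_mul_of_nonneg_left ?_ (by linarith)
    have := thr_le d
    have := card_cells_pos Q
    nlinarith
  have h4 : (avg F Q - a) * U.card ≤ (avg F Q - a) * ((cells Q).card / 4) :=
    mul_le_mul_of_nonneg_left hcardU (by linarith)
  linarith

/-- The maximal cubes below `𝒬` with average above `μ`, provided `{F > μ}` fills at most half of
them. -/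
def stopFam (𝒬 : Finset (ℕ × (Fin d → ℤ))) (F : (Fin d → ℤ) → ℝ) (μ : ℝ) :
    Finset (ℕ × (Fin d → ℤ)) := by
  classical
  exact (𝒬.biUnion subcubes).filter fun S => μ < avg F S ∧ 2 * cnt F μ S ≤ (cells S).card ∧
    ∀ T ∈ 𝒬.biUnion subcubes, S.1 < T.1 → cells S ⊆ cells T → avg F T ≤ μ

lemma mem_stopFam {𝒬 : Finset (ℕ × (Fin d → ℤ))} {F : (Fin d → ℤ) → ℝ} {μ : ℝ}
    {S : ℕ × (Fin d → ℤ)} : S ∈ stopFam 𝒬 F μ ↔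
      (∃ Q ∈ 𝒬, S ∈ subcubes Q) ∧ μ < avg F S ∧ 2 * cnt F μ S ≤ (cells S).card ∧
      ∀ T, (∃ Q ∈ 𝒬, T ∈ subcubes Q) → S.1 < T.1 → cells S ⊆ cells T → avg F T ≤ μ := by
  simp [stopFam]

/-- `𝒬` contains every dyadic cube between two of its members. -/
def IsConvexFam (𝒬 : Finset (ℕ × (Fin d → ℤ))) : Prop :=
  ∀ P ∈ 𝒬, ∀ R ∈ 𝒬, ∀ T, P.1 ≤ T.1 → T.1 ≤ R.1 → cells P ⊆ cells T → cells T ⊆ cells R → T ∈ 𝒬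

/-- The members of `𝒬` whose average exceeds that of all larger members. -/
def recFam (𝒬 : Finset (ℕ × (Fin d → ℤ))) (F : (Fin d → ℤ) → ℝ) :
    Finset (ℕ × (Fin d → ℤ)) := by
  classical
  exact 𝒬.filter fun Q => ∀ T ∈ 𝒬, Q.1 < T.1 → cells Q ⊆ cells T → avg F T < avg F Q

lemma mem_recFam {𝒬 : Finset (ℕ × (Fin d → ℤ))} {F : (Fin d → ℤ) → ℝ}
    {Q : ℕ × (Fin d → ℤ)} : Q ∈ recFam 𝒬 F ↔
      Q ∈ 𝒬 ∧ ∀ T ∈ 𝒬, Q.1 < T.1 → cells Q ⊆ cells T → avg F T < avg F Q := by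
  simp [recFam]

lemma maxFam_subset_recFam (𝒬 : Finset (ℕ × (Fin d → ℤ))) (F : (Fin d → ℤ) → ℝ) (μ : ℝ) :
    maxFam 𝒬 F μ ⊆ recFam 𝒬 F := by
  intro Q hQ
  rw [mem_maxFam] at hQ
  exact mem_recFam.2 ⟨hQ.1, fun T hT hlt hsub => (hQ.2.2 T hT hlt hsub).trans_lt hQ.2.1⟩

lemma exists_mem_stopFam {𝒬 : Finset (ℕ × (Fin d → ℤ))} (h𝒬 : IsConvexFam 𝒬)
    {F : (Fin d → ℤ) → ℝ} {μ : ℝ} {P Q : ℕ × (Fin d → ℤ)} (hQ : Q ∈ recFam 𝒬 F)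
    (hQμ : avg F Q ≤ μ) (hP : P ∈ denseFam F Q) (hPμ : μ < avg F P) :
    ∃ S ∈ stopFam 𝒬 F μ, S.1 < Q.1 ∧ cells S ⊆ cells Q ∧ cells P ⊆ cells S := by
  classical
  obtain ⟨hQ𝒬, hrec⟩ := mem_recFam.1 hQ
  obtain ⟨hPQ, hPd, hPmax⟩ := mem_denseFam.1 hP
  obtain ⟨S, hS, hSmax⟩ := Finset.exists_max_image
    ((subcubes Q).filter fun S => μ < avg F S ∧ P.1 ≤ S.1 ∧ cells P ⊆ cells S) Prod.fst
    ⟨P, by simp [hPQ, hPμ]⟩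
  obtain ⟨hSQ, hSμ, hPS, hPS'⟩ := Finset.mem_filter.1 hS
  have hSQ' := mem_subcubes.1 hSQ
  obtain ⟨x, hxP⟩ := cells_nonempty P
  have hxS := hPS' hxP
  have hxQ := hSQ'.2 hxS
  have hlt : S.1 < Q.1 := by
    refine lt_of_le_of_ne hSQ'.1 fun h => ?_
    rw [eq_of_mem_cells hxS hxQ h] at hSμ
    linarith
  have hbetween : ∀ T ∈ subcubes Q, S.1 < T.1 → cells S ⊆ cells T → avg F T ≤ μ := by
    intro T hT hST hsub
    by_contra! h
    have := hSmax T (by simp [hT, h, hPS.trans hST.le, hPS'.trans hsub])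
    omega
  refine ⟨S, mem_stopFam.2 ⟨⟨Q, hQ𝒬, hSQ⟩, hSμ, ?_, ?_⟩, hlt, hSQ'.2, hPS'⟩
  · set T : ℕ × (Fin d → ℤ) := (S.1 + 1, anc (S.1 + 1) x) with hT
    have hxT : x ∈ cells T := mem_cells_anc _ _
    have hST : cells S ⊆ cells T := cells_subset hxS hxT (by simp [hT])
    have hTQ : T ∈ subcubes Q := mem_subcubes.2 ⟨by simp only [hT]; omega,
      cells_subset hxT hxQ (by simp only [hT]; omega)⟩
    have hTμ := hbetween T hTQ (by simp [hT]) hST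
    have hnd := hPmax T hTQ (by simp only [hT]; omega) (hPS'.trans hST)
    have hcT : cnt F μ T ≤ thr d * (cells T).card := by
      by_contra! h
      exact hnd ⟨h.le.trans (cnt_le_cntGe F hQμ T),
        h.le.trans (cnt_le_cntGe F (by linarith) T)⟩
    have hcS : cnt F μ S ≤ cnt F μ T :=
      Finset.sum_le_sum_of_subset_of_nonneg hST fun _ _ _ => lev_nonneg _ _ _
    have hcard : thr d * (cells T).card = (cells S).card / 2 := by
      rw [card_cells, card_cells, thr]
      simp only [hT, pow_succ, mul_pow]
      field_simp
    linarith
  · rintro T ⟨R, hR, hTR⟩ hST hsub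
    have hxT := hsub hxS
    have hTR' := mem_subcubes.1 hTR
    by_cases h : T.1 ≤ Q.1
    · exact hbetween T (mem_subcubes.2 ⟨h, cells_subset hxT hxQ h⟩) hST hsub
    · push Not at h
      have hQT := cells_subset hxQ hxT h.le
      exact (hrec T (h𝒬 Q hQ𝒬 R hR T h.le hTR'.1 hQT hTR'.2) h hQT).le.trans hQμ

lemma stopFam_nonnested (𝒬 : Finset (ℕ × (Fin d → ℤ))) (F : (Fin d → ℤ) → ℝ) (μ : ℝ) :
    ∀ P ∈ stopFam 𝒬 F μ, ∀ Q ∈ stopFam 𝒬 F μ, P.1 < Q.1 → ¬ cells P ⊆ cells Q := by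
  intro P hP Q hQ hlt hsub
  rw [mem_stopFam] at hP hQ
  linarith [hP.2.2.2 Q hQ.1 hlt hsub, hQ.2.1]

/-- The part of `{F > μ}` in `Q` covered by stopping cubes. -/
def stopMass (𝒬 : Finset (ℕ × (Fin d → ℤ))) (F : (Fin d → ℤ) → ℝ) (μ : ℝ)
    (Q : ℕ × (Fin d → ℤ)) : ℝ :=
  ∑ S ∈ stopFam 𝒬 F μ, if S.1 < Q.1 ∧ cells S ⊆ cells Q then cnt F μ S else 0

lemma stopMass_nonneg (𝒬 : Finset (ℕ × (Fin d → ℤ))) (F : (Fin d → ℤ) → ℝ) (μ : ℝ)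
    (Q : ℕ × (Fin d → ℤ)) : 0 ≤ stopMass 𝒬 F μ Q := by
  refine Finset.sum_nonneg fun S _ => ?_
  split_ifs
  · exact cnt_nonneg _ _ _
  · exact le_rfl

lemma sum_denseFam_le_stopMass {𝒬 : Finset (ℕ × (Fin d → ℤ))} (h𝒬 : IsConvexFam 𝒬)
    {F : (Fin d → ℤ) → ℝ} {μ : ℝ} {Q : ℕ × (Fin d → ℤ)} (hQ : Q ∈ recFam 𝒬 F)
    (hQμ : avg F Q ≤ μ) :
    (∑ P ∈ denseFam F Q, if μ < (avg F P + avg F Q) / 2 then thr d * (cells P).card else 0) ≤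
      stopMass 𝒬 F μ Q := by
  classical
  rw [← Finset.sum_filter, stopMass, ← Finset.sum_filter]
  calc _ ≤ ∑ P ∈ (denseFam F Q).filter fun P => μ < (avg F P + avg F Q) / 2,
        ∑ x ∈ cells P, lev F μ x := by
        refine Finset.sum_le_sum fun P hP => ?_
        rw [Finset.mem_filter] at hP
        exact (mem_denseFam.1 hP.1).2.1.2.trans (cntGe_le_cnt F hP.2 P)
    _ = ∑ x ∈ ((denseFam F Q).filter fun P => μ < (avg F P + avg F Q) / 2).biUnion cells,
        lev F μ x := by
        rw [Finset.sum_biUnion]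
        exact (denseFam_disjoint F Q).subset (Finset.coe_subset.2 (Finset.filter_subset _ _))
    _ ≤ ∑ x ∈ ((stopFam 𝒬 F μ).filter fun S => S.1 < Q.1 ∧ cells S ⊆ cells Q).biUnion cells,
        lev F μ x := by
        refine Finset.sum_le_sum_of_subset_of_nonneg ?_ fun _ _ _ => lev_nonneg _ _ _
        refine Finset.biUnion_subset.2 fun P hP => ?_
        rw [Finset.mem_filter] at hP
        obtain ⟨S, hS, hlt, hSQ, hPS⟩ := exists_mem_stopFam h𝒬 hQ hQμ hP.1 (by linarith [hP.2])
        exact hPS.trans (Finset.subset_biUnion_of_mem cells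
          (Finset.mem_filter.2 ⟨hS, hlt, hSQ⟩))
    _ = _ := by
        rw [Finset.sum_biUnion]
        · rfl
        · exact (pairwiseDisjoint_cells (stopFam_nonnested 𝒬 F μ)).subset
            (Finset.coe_subset.2 (Finset.filter_subset _ _))

lemma sum_inv_side_le (𝒬 : Finset (ℕ × (Fin d → ℤ))) (S : ℕ × (Fin d → ℤ)) :
    (∑ Q ∈ 𝒬, if S.1 < Q.1 ∧ cells S ⊆ cells Q then ((2 : ℝ) ^ Q.1)⁻¹ else 0) ≤
      ((2 : ℝ) ^ S.1)⁻¹ := by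
  classical
  rw [← Finset.sum_filter]
  obtain ⟨x, hx⟩ := cells_nonempty S
  set 𝒯 := 𝒬.filter fun Q => S.1 < Q.1 ∧ cells S ⊆ cells Q with h𝒯
  have hinj : Set.InjOn Prod.fst (𝒯 : Set (ℕ × (Fin d → ℤ))) := by
    intro P hP Q hQ h
    rw [Finset.mem_coe, h𝒯, Finset.mem_filter] at hP hQ
    exact eq_of_mem_cells (hP.2.2 hx) (hQ.2.2 hx) h
  have hgeo : ∀ n : ℕ, ∑ k ∈ Finset.Ioc S.1 (S.1 + n), ((2 : ℝ) ^ k)⁻¹ ≤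
      ((2 : ℝ) ^ S.1)⁻¹ - ((2 : ℝ) ^ (S.1 + n))⁻¹ := by
    intro n
    induction n with
    | zero => simp
    | succ n ih =>
      rw [← add_assoc, Finset.sum_Ioc_succ_top (by omega)]
      have : ((2 : ℝ) ^ (S.1 + n))⁻¹ = 2 * ((2 : ℝ) ^ (S.1 + n + 1))⁻¹ := by
        rw [pow_succ]; field_simp
      linarith
  rw [← Finset.sum_image (f := fun k : ℕ => ((2 : ℝ) ^ k)⁻¹) hinj]
  have hsub : 𝒯.image Prod.fst ⊆ Finset.Ioc S.1 (S.1 + 𝒯.sup Prod.fst) := by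
    intro k hk
    obtain ⟨Q, hQ, rfl⟩ := Finset.mem_image.1 hk
    have h1 := Finset.le_sup (f := Prod.fst) hQ
    rw [h𝒯, Finset.mem_filter] at hQ
    rw [Finset.mem_Ioc]
    omega
  refine (Finset.sum_le_sum_of_subset_of_nonneg hsub fun _ _ _ => by positivity).trans ?_
  refine (hgeo _).trans ?_
  rw [sub_le_self_iff]
  positivity

/-- The stopping masses, weighted by inverse side lengths, are controlled by the perimeter. -/
lemma sum_stopMass_le {𝒬 : Finset (ℕ × (Fin d → ℤ))} (F : (Fin d → ℤ) → ℝ) (μ : ℝ)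
    {𝓔 : Finset ((Fin d → ℤ) × Fin d)} (h𝓔 : ∀ Q ∈ 𝒬, edges Q ⊆ 𝓔) :
    ∑ Q ∈ 𝒬, stopMass 𝒬 F μ Q / 2 ^ Q.1 ≤ 2 * ∑ e ∈ 𝓔, jump (lev F μ) e := by
  calc ∑ Q ∈ 𝒬, stopMass 𝒬 F μ Q / 2 ^ Q.1
      = ∑ S ∈ stopFam 𝒬 F μ, cnt F μ S *
        ∑ Q ∈ 𝒬, if S.1 < Q.1 ∧ cells S ⊆ cells Q then ((2 : ℝ) ^ Q.1)⁻¹ else 0 := by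
        simp only [stopMass, Finset.sum_div, Finset.mul_sum]
        rw [Finset.sum_comm]
        refine Finset.sum_congr rfl fun S _ => Finset.sum_congr rfl fun Q _ => ?_
        split_ifs
        · rw [div_eq_mul_inv]
        · simp
    _ ≤ ∑ S ∈ stopFam 𝒬 F μ, 2 * per F μ S := by
        refine Finset.sum_le_sum fun S hS => ?_
        refine (mul_le_mul_of_nonneg_left (sum_inv_side_le 𝒬 S) (cnt_nonneg F μ S)).trans ?_
        rw [mul_inv_le_iff₀ (by positivity)]
        have := cnt_le_of_low (mem_stopFam.1 hS).2.2.1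
        linarith
    _ ≤ _ := by
        rw [← Finset.mul_sum]
        refine mul_le_mul_of_nonneg_left ?_ (by norm_num)
        refine sum_edges_le ?_ (stopFam_nonnested 𝒬 F μ) fun e => jump_nonneg _ _
        intro S hS
        obtain ⟨⟨Q, hQ, hSQ⟩, -⟩ := mem_stopFam.1 hS
        refine subset_trans ?_ (h𝓔 Q hQ)
        intro e he
        rw [mem_edges] at he ⊢
        exact ⟨(mem_subcubes.1 hSQ).2 he.1, (mem_subcubes.1 hSQ).2 he.2⟩

/-! ### Integration over the levels -/

lemma measurable_lev (F : (Fin d → ℤ) → ℝ) (x : Fin d → ℤ) : Measurable fun μ => lev F μ x := by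
  unfold lev
  exact Measurable.ite (measurableSet_lt measurable_id measurable_const) measurable_const
    measurable_const

lemma measurable_jump_lev (F : (Fin d → ℤ) → ℝ) (e : (Fin d → ℤ) × Fin d) :
    Measurable fun μ => jump (lev F μ) e := by
  unfold jump
  exact continuous_abs.measurable.comp ((measurable_lev F _).sub (measurable_lev F _))

lemma lintegral_jump_lev (F : (Fin d → ℤ) → ℝ) (e : (Fin d → ℤ) × Fin d) :
    ∫⁻ μ, ENNReal.ofReal (jump (lev F μ) e) = ENNReal.ofReal (jump F e) := by
  have h : ∀ μ, ENNReal.ofReal (jump (lev F μ) e) =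
      (Set.Ico (min (F e.1) (F (shift e.1 e.2))) (max (F e.1) (F (shift e.1 e.2)))).indicator
        1 μ := by
    intro μ
    simp only [jump, lev, Set.indicator_apply, Set.mem_Ico, min_le_iff, lt_max_iff]
    split_ifs <;> first | (norm_num; done) | (exfalso; grind)
  simp_rw [h]
  rw [lintegral_indicator_one measurableSet_Ico, Real.volume_Ico, max_sub_min_eq_abs, jump]

lemma lintegral_sum_jump_lev (F : (Fin d → ℤ) → ℝ) (𝓔 : Finset ((Fin d → ℤ) × Fin d)) :
    ∫⁻ μ, ENNReal.ofReal (∑ e ∈ 𝓔, jump (lev F μ) e) = ENNReal.ofReal (∑ e ∈ 𝓔, jump F e) := by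
  simp_rw [ENNReal.ofReal_sum_of_nonneg fun e _ => jump_nonneg _ e]
  rw [lintegral_finsetSum _ fun e _ => (measurable_jump_lev F e).ennreal_ofReal]
  simp_rw [lintegral_jump_lev]

lemma sum_lintegral_le {ι α : Type*} [MeasurableSpace α] (ν : Measure α) (s : Finset ι)
    (g : ι → α → ℝ≥0∞) : ∑ i ∈ s, ∫⁻ a, g i a ∂ν ≤ ∫⁻ a, ∑ i ∈ s, g i a ∂ν := by
  classical
  induction s using Finset.induction_on with
  | empty => simp
  | insert i s hi ih =>
    simp_rw [Finset.sum_insert hi]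
    exact (add_le_add le_rfl ih).trans (le_lintegral_add _ _)

/-- The total excess of the averages over the dense subcubes of `Q`. -/
def excess (F : (Fin d → ℤ) → ℝ) (Q : ℕ × (Fin d → ℤ)) : ℝ :=
  2 * ∑ P ∈ denseFam F Q, max (avg F P - avg F Q) 0 * (cells P).card

lemma ofReal_excess_le {𝒬 : Finset (ℕ × (Fin d → ℤ))} (h𝒬 : IsConvexFam 𝒬)
    {F : (Fin d → ℤ) → ℝ} {Q : ℕ × (Fin d → ℤ)} (hQ : Q ∈ recFam 𝒬 F) :
    ENNReal.ofReal (excess F Q / 2 ^ Q.1) ≤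
      ∫⁻ μ, ENNReal.ofReal (4 / thr d * (stopMass 𝒬 F μ Q / 2 ^ Q.1)) := by
  have hthr := thr_pos d
  have h1 : ENNReal.ofReal (excess F Q / 2 ^ Q.1) = ∑ P ∈ denseFam F Q,
      ∫⁻ μ, (Set.Ico (avg F Q) ((avg F P + avg F Q) / 2)).indicator
        (fun _ => ENNReal.ofReal (4 * (cells P).card / 2 ^ Q.1)) μ := by
    simp_rw [lintegral_indicator measurableSet_Ico, setLIntegral_const, Real.volume_Ico]
    rw [excess, Finset.mul_sum, Finset.sum_div, ENNReal.ofReal_sum_of_nonneg]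
    · refine Finset.sum_congr rfl fun P _ => ?_
      rw [← ENNReal.ofReal_mul (by positivity)]
      rcases le_total (avg F P - avg F Q) 0 with h | h
      · rw [max_eq_right h, ENNReal.ofReal_of_nonpos, ENNReal.ofReal_of_nonpos]
        · exact mul_nonpos_of_nonneg_of_nonpos (by positivity) (by linarith)
        · simp
      · rw [max_eq_left h]
        congr 1
        ring
    · intro P _
      positivity
  rw [h1]
  refine (sum_lintegral_le _ _ _).trans (lintegral_mono fun μ => ?_)
  rcases lt_or_ge μ (avg F Q) with h | h
  · refine le_of_eq_of_le (Finset.sum_eq_zero fun P _ => ?_) zero_le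
    exact Set.indicator_of_notMem (fun hμ => absurd hμ.1 (not_le.2 h)) _
  · have h2 : ∀ P ∈ denseFam F Q, (Set.Ico (avg F Q) ((avg F P + avg F Q) / 2)).indicator
        (fun _ => ENNReal.ofReal (4 * (cells P).card / 2 ^ Q.1)) μ = ENNReal.ofReal
        (4 / thr d / 2 ^ Q.1 *
          if μ < (avg F P + avg F Q) / 2 then thr d * (cells P).card else 0) := by
      intro P _
      simp only [Set.indicator_apply, Set.mem_Ico, h, true_and]
      split_ifs
      · congr 1; field_simp
      · simp
    rw [Finset.sum_congr rfl h2, ← ENNReal.ofReal_sum_of_nonneg, ← Finset.mul_sum]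
    · refine ENNReal.ofReal_le_ofReal ?_
      rw [mul_div_assoc', mul_comm (4 / thr d) (stopMass _ _ _ _), mul_div_assoc, mul_comm]
      exact mul_le_mul_of_nonneg_right (sum_denseFam_le_stopMass h𝒬 hQ h) (by positivity)
    · intro P _
      split_ifs <;> positivity

lemma sum_ofReal_excess_le {𝒬 : Finset (ℕ × (Fin d → ℤ))} (h𝒬 : IsConvexFam 𝒬)
    (F : (Fin d → ℤ) → ℝ) {𝓔 : Finset ((Fin d → ℤ) × Fin d)} (h𝓔 : ∀ Q ∈ 𝒬, edges Q ⊆ 𝓔) :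
    ∑ Q ∈ recFam 𝒬 F, ENNReal.ofReal (excess F Q / 2 ^ Q.1) ≤
      ENNReal.ofReal (8 / thr d) * ENNReal.ofReal (∑ e ∈ 𝓔, jump F e) := by
  have hthr := thr_pos d
  have hsub : recFam 𝒬 F ⊆ 𝒬 := fun Q hQ => (mem_recFam.1 hQ).1
  have hnn : ∀ μ Q, 0 ≤ 4 / thr d * (stopMass 𝒬 F μ Q / 2 ^ Q.1) := fun μ Q =>
    mul_nonneg (by positivity) (div_nonneg (stopMass_nonneg _ _ _ _) (by positivity))
  refine (Finset.sum_le_sum fun Q hQ => ofReal_excess_le h𝒬 hQ).trans ?_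
  refine (sum_lintegral_le _ _ _).trans ?_
  rw [← lintegral_sum_jump_lev F 𝓔, ← lintegral_const_mul' _ _ ENNReal.ofReal_ne_top]
  refine lintegral_mono fun μ => ?_
  rw [← ENNReal.ofReal_sum_of_nonneg fun Q _ => hnn μ Q, ← ENNReal.ofReal_mul (by positivity)]
  refine ENNReal.ofReal_le_ofReal ?_
  refine (Finset.sum_le_sum_of_subset_of_nonneg hsub fun Q _ _ => hnn μ Q).trans ?_
  rw [← Finset.mul_sum]
  refine (mul_le_mul_of_nonneg_left (sum_stopMass_le F μ h𝓔) (by positivity)).trans (le_of_eq ?_)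
  ring

lemma sum_low_le (𝒬 : Finset (ℕ × (Fin d → ℤ))) (F : (Fin d → ℤ) → ℝ) (μ : ℝ) :
    ENNReal.ofReal (∑ Q ∈ maxFam 𝒬 F μ, if cnt F μ Q < thr d / 4 * (cells Q).card
        then (cells Q).card / (2 : ℝ) ^ Q.1 else 0) ≤
      ∑ Q ∈ recFam 𝒬 F,
        (Set.Ico (avg F Q - excess F Q / (cells Q).card) (avg F Q)).indicator
          (fun _ => ENNReal.ofReal ((cells Q).card / (2 : ℝ) ^ Q.1)) μ := by
  rw [ENNReal.ofReal_sum_of_nonneg]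
  · refine (Finset.sum_le_sum fun Q hQ => ?_).trans
      (Finset.sum_le_sum_of_subset (maxFam_subset_recFam 𝒬 F μ))
    split_ifs with h
    · have hμ := (mem_maxFam.1 hQ).2.1
      rw [Set.indicator_of_mem]
      refine ⟨?_, hμ⟩
      rw [sub_le_comm, le_div_iff₀ (card_cells_pos Q)]
      exact excess_le F hμ h
    · simp
  · intro Q _
    split_ifs <;> positivity

/-- The constant of the discrete variation bound. -/
def discreteConst (d : ℕ) : ℝ := 1 + 2 * d * (1 + (thr d / 4)⁻¹) + 2 * d * (8 / thr d)

lemma one_le_discreteConst (d : ℕ) : 1 ≤ discreteConst d := by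
  have := thr_pos d
  rw [discreteConst, add_assoc, le_add_iff_nonneg_right]
  positivity

/-- The maximal function does not increase the variation on the grid by more than a constant. -/
theorem sum_jump_max_le {𝒬 : Finset (ℕ × (Fin d → ℤ))} (h𝒬 : IsConvexFam 𝒬)
    {F M : (Fin d → ℤ) → ℝ} (hM : IsMaxFun 𝒬 F M) {𝓔 : Finset ((Fin d → ℤ) × Fin d)}
    (h𝓔 : ∀ Q ∈ 𝒬, edges Q ⊆ 𝓔) :
    ∑ e ∈ 𝓔, jump M e ≤ discreteConst d * ∑ e ∈ 𝓔, jump F e := by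
  have hthr := thr_pos d
  have hK := one_le_discreteConst d
  have hnn : ∀ G : (Fin d → ℤ) → ℝ, 0 ≤ ∑ e ∈ 𝓔, jump G e := fun G =>
    Finset.sum_nonneg fun e _ => jump_nonneg _ e
  rw [← ENNReal.ofReal_le_ofReal_iff (mul_nonneg (by linarith) (hnn F)),
    ← lintegral_sum_jump_lev M 𝓔]
  have hmeas : ∀ Q, Measurable
      ((Set.Ico (avg F Q - excess F Q / (cells Q).card) (avg F Q)).indicator
        (fun _ => ENNReal.ofReal ((cells Q).card / (2 : ℝ) ^ Q.1))) := fun Q =>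
    measurable_const.indicator measurableSet_Ico
  calc ∫⁻ μ, ENNReal.ofReal (∑ e ∈ 𝓔, jump (lev M μ) e)
      ≤ ∫⁻ μ, (ENNReal.ofReal (1 + 2 * d * (1 + (thr d / 4)⁻¹)) *
          ENNReal.ofReal (∑ e ∈ 𝓔, jump (lev F μ) e) +
        ENNReal.ofReal (2 * d) * ∑ Q ∈ recFam 𝒬 F,
          (Set.Ico (avg F Q - excess F Q / (cells Q).card) (avg F Q)).indicator
            (fun _ => ENNReal.ofReal ((cells Q).card / (2 : ℝ) ^ Q.1)) μ) := by
        refine lintegral_mono fun μ => ?_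
        refine (ENNReal.ofReal_le_ofReal
          (sum_jump_lev_max_le hM μ h𝓔 (c := thr d / 4) (by positivity))).trans ?_
        refine ENNReal.ofReal_add_le.trans ?_
        rw [ENNReal.ofReal_mul (by positivity), ENNReal.ofReal_mul (by positivity)]
        exact add_le_add le_rfl (mul_le_mul_right (sum_low_le 𝒬 F μ) _)
    _ = ENNReal.ofReal (1 + 2 * d * (1 + (thr d / 4)⁻¹)) *
          ENNReal.ofReal (∑ e ∈ 𝓔, jump F e) +
        ENNReal.ofReal (2 * d) * ∑ Q ∈ recFam 𝒬 F, ENNReal.ofReal (excess F Q / 2 ^ Q.1) := by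
        rw [lintegral_add_right _ ((Finset.measurable_sum _ fun Q _ => hmeas Q).const_mul _),
          lintegral_const_mul' _ _ ENNReal.ofReal_ne_top,
          lintegral_const_mul' _ _ ENNReal.ofReal_ne_top, lintegral_sum_jump_lev,
          lintegral_finsetSum _ fun Q _ => hmeas Q]
        congr 2
        refine Finset.sum_congr rfl fun Q _ => ?_
        rw [lintegral_indicator measurableSet_Ico, setLIntegral_const, Real.volume_Ico,
          ← ENNReal.ofReal_mul (by positivity)]
        congr 1
        have := card_cells_pos Q
        field_simp
        ring
    _ ≤ ENNReal.ofReal (1 + 2 * d * (1 + (thr d / 4)⁻¹)) *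
          ENNReal.ofReal (∑ e ∈ 𝓔, jump F e) + ENNReal.ofReal (2 * d) *
        (ENNReal.ofReal (8 / thr d) * ENNReal.ofReal (∑ e ∈ 𝓔, jump F e)) :=
        add_le_add le_rfl (mul_le_mul_right (sum_ofReal_excess_le h𝒬 F h𝓔) _)
    _ = _ := by
        have h1 := hnn F
        rw [← mul_assoc, ← ENNReal.ofReal_mul (by positivity), ← ENNReal.ofReal_mul (by positivity),
          ← ENNReal.ofReal_mul (by positivity), ← ENNReal.ofReal_add (by positivity)
          (by positivity), discreteConst]
        congr 1
        ring

end Discrete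

/-! ### The grid of cells of side `2 ^ (-s)` -/

section Grid

variable {d : ℕ}

/-- The cell of side `2 ^ (-s)` that contains `y`. -/
def loc (s : ℕ) (y : Ed d) : Fin d → ℤ := fun i => ⌊(2 : ℝ) ^ s * y i⌋

/-- The points of a cell of side `2 ^ (-s)`. -/
def cell (s : ℕ) (x : Fin d → ℤ) : Set (Ed d) := Set.preimage (loc s) {x}

/-- The points of a dyadic cube of cells of side `2 ^ (-s)`. -/
def cube (s : ℕ) (Q : ℕ × (Fin d → ℤ)) : Set (Ed d) := {y | loc s y ∈ cells Q}

/-- The averages of `f` over the cells. -/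
def cellAvg (s : ℕ) (f : Ed d → ℝ) (x : Fin d → ℤ) : ℝ := (2 ^ s) ^ d * ∫ y in cell s x, f y

lemma loc_apply (s : ℕ) (y : Ed d) (i : Fin d) : loc s y i = ⌊(2 : ℝ) ^ s * y i⌋ := rfl

lemma mem_cell {s : ℕ} {x : Fin d → ℤ} {y : Ed d} : y ∈ cell s x ↔ loc s y = x := Iff.rfl

lemma measurable_loc (s : ℕ) : Measurable (loc s : Ed d → Fin d → ℤ) := by
  refine measurable_pi_iff.2 fun i => Int.measurable_floor.comp (Continuous.measurable ?_)
  fun_prop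

lemma measurableSet_cell (s : ℕ) (x : Fin d → ℤ) : MeasurableSet (cell s x) :=
  measurable_loc s (measurableSet_singleton x)

lemma disjoint_cell (s : ℕ) {x z : Fin d → ℤ} (h : x ≠ z) : Disjoint (cell s x) (cell s z) :=
  Disjoint.preimage _ (Set.disjoint_singleton.2 h)

lemma volume_box (a b : Fin d → ℝ) :
    volume {y : Ed d | ∀ i, y i ∈ Ico (a i) (b i)} = ∏ i, ENNReal.ofReal (b i - a i) := by
  rw [← Real.volume_pi_Ico, ← (EuclideanSpace.volume_preserving_symm_measurableEquiv_toLp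
    (Fin d)).measure_preimage]
  · congr 1
    ext y
    simp [Set.mem_pi]
  · exact (MeasurableSet.univ_pi fun i => measurableSet_Ico).nullMeasurableSet

lemma mem_cell_iff {s : ℕ} {x : Fin d → ℤ} {y : Ed d} :
    y ∈ cell s x ↔ ∀ i, y i ∈ Ico (x i / (2 : ℝ) ^ s) ((x i + 1) / (2 : ℝ) ^ s) := by
  have h : (0 : ℝ) < 2 ^ s := by positivity
  rw [mem_cell, funext_iff]
  refine forall_congr' fun i => ?_
  rw [loc_apply, Int.floor_eq_iff, mem_Ico, div_le_iff₀ h, lt_div_iff₀ h, mul_comm]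

lemma volume_cell (s : ℕ) (x : Fin d → ℤ) :
    volume (cell s x) = ENNReal.ofReal (((2 : ℝ) ^ s) ^ d)⁻¹ := by
  have h : cell s x = {y : Ed d | ∀ i, y i ∈ Ico (x i / (2 : ℝ) ^ s) ((x i + 1) / (2 : ℝ) ^ s)} :=
    Set.ext fun y => mem_cell_iff
  rw [h, volume_box]
  have : ∀ i, ((x i : ℝ) + 1) / 2 ^ s - x i / 2 ^ s = (2 ^ s)⁻¹ := fun i => by ring
  simp_rw [this]
  rw [Finset.prod_const, Finset.card_univ, Fintype.card_fin, ← ENNReal.ofReal_pow (by positivity),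
    inv_pow]

lemma volume_real_cell (s : ℕ) (x : Fin d → ℤ) :
    volume.real (cell s x) = (((2 : ℝ) ^ s) ^ d)⁻¹ := by
  rw [Measure.real, volume_cell, ENNReal.toReal_ofReal (by positivity)]

lemma cube_eq_biUnion (s : ℕ) (Q : ℕ × (Fin d → ℤ)) : cube s Q = ⋃ x ∈ cells Q, cell s x := by
  ext y
  simp [cube, mem_cell]

/-- Averages over cubes are averages of the averages over cells. -/
lemma avg_cellAvg (s : ℕ) {f : Ed d → ℝ} (hf : Integrable f) (Q : ℕ × (Fin d → ℤ)) :
    avg (cellAvg s f) Q = ⨍ y in cube s Q, f y := by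
  have hdisj : Set.Pairwise (cells Q : Set (Fin d → ℤ)) (Function.onFun Disjoint (cell s)) :=
    fun x _ z _ h => disjoint_cell s h
  have hvol : volume.real (cube s Q) = (cells Q).card * (((2 : ℝ) ^ s) ^ d)⁻¹ := by
    rw [cube_eq_biUnion, measureReal_biUnion_finset hdisj (fun x _ => measurableSet_cell s x)
      (fun x _ => by rw [volume_cell]; exact ENNReal.ofReal_ne_top)]
    simp_rw [volume_real_cell]
    simp
  have hint : ∫ y in cube s Q, f y = ∑ x ∈ cells Q, ∫ y in cell s x, f y := by
    rw [cube_eq_biUnion, integral_biUnion_finset _ (fun x _ => measurableSet_cell s x) hdisj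
      fun x _ => hf.integrableOn]
  rw [setAverage_eq, hvol, hint, avg, smul_eq_mul]
  simp only [cellAvg]
  rw [← Finset.mul_sum]
  have := card_cells_pos Q
  field_simp

lemma measurable_comp_loc (s : ℕ) (U : (Fin d → ℤ) → ℝ) : Measurable fun y : Ed d => U (loc s y) :=
  (measurable_of_countable U).comp (measurable_loc s)

lemma finite_loc_image (s : ℕ) {K : Set (Ed d)} (hK : Bornology.IsBounded K) :
    (loc s '' K).Finite := by
  obtain ⟨R, hR⟩ := hK.exists_norm_le
  refine (Set.finite_Icc (fun _ : Fin d => ⌊-((2 : ℝ) ^ s * R)⌋)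
    (fun _ => ⌊(2 : ℝ) ^ s * R⌋)).subset ?_
  rintro _ ⟨y, hy, rfl⟩
  have h : ∀ i, |y i| ≤ R := fun i => (PiLp.norm_apply_le y i).trans (hR y hy)
  refine ⟨fun i => Int.floor_mono ?_, fun i => Int.floor_mono ?_⟩
  · rw [← mul_neg]
    exact mul_le_mul_of_nonneg_left (abs_le.1 (h i)).1 (by positivity)
  · exact mul_le_mul_of_nonneg_left (abs_le.1 (h i)).2 (by positivity)

lemma abs_cellAvg_le (s : ℕ) {f : Ed d → ℝ} (hf : Integrable f) (x : Fin d → ℤ) :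
    |cellAvg s f x| ≤ (2 ^ s) ^ d * ∫ y, |f y| := by
  rw [cellAvg, abs_mul, abs_of_pos (by positivity)]
  refine mul_le_mul_of_nonneg_left ?_ (by positivity)
  refine abs_integral_le_integral_abs.trans ?_
  exact setIntegral_le_integral hf.abs (Eventually.of_forall fun y => abs_nonneg _)

lemma norm_le_sum_abs (v : Ed d) : ‖v‖ ≤ ∑ i, |v i| := by
  rw [EuclideanSpace.norm_eq]
  refine Real.sqrt_le_iff.2 ⟨Finset.sum_nonneg fun _ _ => abs_nonneg _, ?_⟩
  exact Finset.sum_sq_le_sq_sum_of_nonneg fun _ _ => abs_nonneg _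

lemma norm_sub_le_of_abs_le {y z : Ed d} {r : ℝ} (h : ∀ i, |y i - z i| ≤ r) :
    ‖y - z‖ ≤ d * r := by
  refine (norm_le_sum_abs _).trans ((Finset.sum_le_sum fun i _ => h i).trans ?_)
  simp

lemma cellAvg_sub (s : ℕ) {f g : Ed d → ℝ} (hf : Integrable f) (hg : Integrable g)
    (x : Fin d → ℤ) : cellAvg s (fun y => f y - g y) x = cellAvg s f x - cellAvg s g x := by
  rw [cellAvg, integral_sub hf.integrableOn hg.integrableOn, mul_sub]; rfl

lemma abs_loc_sub_le {s : ℕ} {y z : Ed d} (h : loc s y = loc s z) (i : Fin d) :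
    |y i - z i| ≤ (2 ^ s)⁻¹ := by
  have h1 := Int.abs_sub_lt_one_of_floor_eq_floor (congrFun h i)
  rw [← mul_sub, abs_mul, abs_of_pos (by positivity)] at h1
  rw [← mul_le_mul_iff_right₀ (show (0 : ℝ) < 2 ^ s by positivity), mul_inv_cancel₀ (by positivity)]
  exact h1.le

/-- Averaging over cells is a contraction in `L¹`, up to the finitely many cells that meet `K`. -/
lemma setIntegral_abs_cellAvg_le (s : ℕ) {f : Ed d → ℝ} (hf : Integrable f) {K : Set (Ed d)}
    (hK : Bornology.IsBounded K) : ∫ y in K, |cellAvg s f (loc s y)| ≤ ∫ y, |f y| := by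
  set Z := (finite_loc_image s hK).toFinset with hZ
  have hdisj : Set.Pairwise (Z : Set (Fin d → ℤ)) (Function.onFun Disjoint (cell s)) :=
    fun x _ z _ h => disjoint_cell s h
  have hsub : K ⊆ ⋃ x ∈ Z, cell s x := fun y hy => by
    simp only [hZ, Set.mem_iUnion, Set.Finite.mem_toFinset]
    exact ⟨loc s y, ⟨y, hy, rfl⟩, rfl⟩
  have hon : ∀ x ∈ Z, ∫ y in cell s x, |cellAvg s f (loc s y)| =
      (((2 : ℝ) ^ s) ^ d)⁻¹ * |cellAvg s f x| := by
    intro x _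
    rw [setIntegral_congr_fun (g := fun _ => |cellAvg s f x|) (measurableSet_cell s x)
      fun y hy => by simp only [mem_cell.1 hy], setIntegral_const, volume_real_cell, smul_eq_mul]
  have hint : ∀ x ∈ Z, IntegrableOn (fun y => |cellAvg s f (loc s y)|) (cell s x) := by
    intro x _
    refine (integrableOn_const (C := |cellAvg s f x|) (by
      rw [volume_cell]; exact ENNReal.ofReal_ne_top)).congr_fun ?_ (measurableSet_cell s x)
    intro y hy
    simp only [mem_cell.1 hy]
  calc ∫ y in K, |cellAvg s f (loc s y)|
      ≤ ∫ y in ⋃ x ∈ Z, cell s x, |cellAvg s f (loc s y)| := by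
        refine setIntegral_mono_set ((integrableOn_finset_iUnion).2 hint)
          (Eventually.of_forall fun y => abs_nonneg _) hsub.eventuallyLE
    _ = ∑ x ∈ Z, (((2 : ℝ) ^ s) ^ d)⁻¹ * |cellAvg s f x| := by
        rw [integral_biUnion_finset _ (fun x _ => measurableSet_cell s x) hdisj hint]
        exact Finset.sum_congr rfl hon
    _ ≤ ∑ x ∈ Z, ∫ y in cell s x, |f y| := by
        refine Finset.sum_le_sum fun x _ => ?_
        rw [cellAvg, abs_mul, abs_of_pos (by positivity), inv_mul_cancel_left₀ (by positivity)]
        exact abs_integral_le_integral_abs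
    _ = ∫ y in ⋃ x ∈ Z, cell s x, |f y| := by
        rw [integral_biUnion_finset _ (fun x _ => measurableSet_cell s x) hdisj
          fun x _ => hf.abs.integrableOn]
    _ ≤ ∫ y, |f y| := setIntegral_le_integral hf.abs (Eventually.of_forall fun y => abs_nonneg _)

lemma integrableOn_comp_loc (s : ℕ) {U : (Fin d → ℤ) → ℝ} {B : ℝ} (hU : ∀ x, |U x| ≤ B)
    {K : Set (Ed d)} (hK : IsCompact K) : IntegrableOn (fun y => U (loc s y)) K := by
  refine Measure.integrableOn_of_bounded (M := B) hK.measure_lt_top.ne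
    (measurable_comp_loc s U).aestronglyMeasurable (Eventually.of_forall fun y => hU _)

/-- Averages over cells converge in `L¹` on compact sets. -/
lemma tendsto_setIntegral_abs_sub_cellAvg {f : Ed d → ℝ} (hf : Integrable f) {K : Set (Ed d)}
    (hK : IsCompact K) :
    Tendsto (fun s => ∫ y in K, |f y - cellAvg s f (loc s y)|) atTop (𝓝 0) := by
  rw [Metric.tendsto_atTop]
  intro ε hε
  obtain ⟨g, hgs, hfg, hgc, hgi⟩ :=
    hf.exists_hasCompactSupport_integral_sub_le (ε := ε / 4) (by positivity)
  have hV : 0 < volume.real K + 1 := by positivity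
  have huc := hgs.uniformContinuous_of_continuous hgc
  obtain ⟨δ, hδ, hδg⟩ := Metric.uniformContinuous_iff.1 huc (ε / (4 * (volume.real K + 1)))
    (by positivity)
  have hlim : Tendsto (fun s : ℕ => (d : ℝ) * ((2 : ℝ) ^ s)⁻¹) atTop (𝓝 0) := by
    have := (tendsto_inv_atTop_zero.comp
      (tendsto_pow_atTop_atTop_of_one_lt (one_lt_two (α := ℝ)))).const_mul (d : ℝ)
    simpa using this
  obtain ⟨N, hN⟩ := Filter.eventually_atTop.1 (hlim.eventually_lt_const hδ)
  refine ⟨N, fun s hs => ?_⟩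
  have hosc : ∀ y : Ed d, |g y - cellAvg s g (loc s y)| ≤ ε / (4 * (volume.real K + 1)) := by
    intro y
    have h1 : g y - cellAvg s g (loc s y) =
        (2 ^ s) ^ d * ∫ z in cell s (loc s y), (g y - g z) := by
      have hc : IntegrableOn (fun _ : Ed d => g y) (cell s (loc s y)) :=
        integrableOn_const (by rw [volume_cell]; exact ENNReal.ofReal_ne_top)
      rw [integral_sub hc hgi.integrableOn, setIntegral_const, volume_real_cell, smul_eq_mul,
        mul_sub, mul_inv_cancel_left₀ (by positivity)]
      rfl
    have h2 : ‖∫ z in cell s (loc s y), (g y - g z)‖ ≤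
        ε / (4 * (volume.real K + 1)) * volume.real (cell s (loc s y)) := by
      refine norm_setIntegral_le_of_norm_le_const
        (by rw [volume_cell]; exact ENNReal.ofReal_lt_top) fun z hz => ?_
      have h3 : dist y z < δ := by
        rw [dist_eq_norm]
        exact (norm_sub_le_of_abs_le (abs_loc_sub_le (mem_cell.1 hz).symm)).trans_lt (hN s hs)
      exact (hδg h3).le
    rw [h1, abs_mul, abs_of_pos (by positivity)]
    rw [volume_real_cell, Real.norm_eq_abs, ← div_eq_mul_inv, le_div_iff₀ (by positivity)] at h2
    linarith
  have hfgi : Integrable fun y => f y - g y := hf.sub hgi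
  have hbound : ∀ h : Ed d → ℝ, Integrable h →
      IntegrableOn (fun y => cellAvg s h (loc s y)) K := fun h hh =>
    integrableOn_comp_loc s (abs_cellAvg_le s hh) hK
  have hi1 : IntegrableOn (fun y => |f y - g y|) K := hfgi.abs.integrableOn
  have hi2 : IntegrableOn (fun y => |cellAvg s (fun y => f y - g y) (loc s y)|) K :=
    (hbound _ hfgi).abs
  have hi12 : IntegrableOn
      (fun y => |f y - g y| + |cellAvg s (fun y => f y - g y) (loc s y)|) K := hi1.add hi2
  have hle : ∫ y in K, |f y - cellAvg s f (loc s y)| ≤ ∫ y in K, (|f y - g y| +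
      |cellAvg s (fun y => f y - g y) (loc s y)| + ε / (4 * (volume.real K + 1))) := by
    refine setIntegral_mono_on ((hf.integrableOn.sub (hbound f hf)).abs) ?_ hK.measurableSet ?_
    · exact hi12.add (integrableOn_const hK.measure_lt_top.ne)
    · intro y _
      rw [cellAvg_sub s hf hgi]
      have h1 : f y - cellAvg s f (loc s y) = (f y - g y) -
        (cellAvg s f (loc s y) - cellAvg s g (loc s y)) + (g y - cellAvg s g (loc s y)) := by ring
      rw [h1]
      exact (abs_add_le _ _).trans (add_le_add (abs_sub _ _) (hosc y))
  have hfg' : ∫ y, |f y - g y| ≤ ε / 4 := hfg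
  have h1 : ∫ y in K, |f y - g y| ≤ ε / 4 :=
    (setIntegral_le_integral hfgi.abs (Eventually.of_forall fun y => abs_nonneg _)).trans hfg'
  have h2 := (setIntegral_abs_cellAvg_le s hfgi hK.isBounded).trans hfg'
  have h3 : ε / (4 * (volume.real K + 1)) * volume.real K ≤ ε / 4 := by
    rw [div_mul_eq_mul_div, div_le_iff₀ (by positivity)]
    nlinarith
  rw [integral_add hi12 (integrableOn_const hK.measure_lt_top.ne), integral_add hi1 hi2,
    setIntegral_const, smul_eq_mul, mul_comm (volume.real K)] at hle
  rw [Real.dist_eq, sub_zero, abs_of_nonneg (integral_nonneg fun y => abs_nonneg _)]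
  linarith

end Grid

/-! ### The variation of step functions -/

section Step

variable {d : ℕ}

/-- The neighbour of `x` in the negative `i`-th direction. -/
def pred (x : Fin d → ℤ) (i : Fin d) : Fin d → ℤ := Function.update x i (x i - 1)

lemma shift_pred (x : Fin d → ℤ) (i : Fin d) : shift (pred x i) i = x := by
  simp [shift, pred]

/-- The area of a face of a cell. -/
def faceArea (d s : ℕ) : ℝ := 2 ^ s / (2 ^ s) ^ d

lemma faceArea_pos (d s : ℕ) : 0 < faceArea d s := by unfold faceArea; positivity

/-- The part of a cell within distance `h` of its lower face in direction `i`. -/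
def slab (s : ℕ) (h : ℝ) (i : Fin d) (z : Fin d → ℤ) : Set (Ed d) :=
  {y | ∀ j, y j ∈ Ico (z j / (2 : ℝ) ^ s)
    (z j / (2 : ℝ) ^ s + (2 ^ s)⁻¹ * if j = i then 2 ^ s * h else 1)}

lemma measurableSet_slab (s : ℕ) (h : ℝ) (i : Fin d) (z : Fin d → ℤ) :
    MeasurableSet (slab s h i z) := by
  simp only [slab, Set.ofPred_forall]
  refine MeasurableSet.iInter fun j => measurableSet_Ico.preimage (Continuous.measurable ?_)
  fun_prop

lemma volume_slab (s : ℕ) {h : ℝ} (hh : 0 ≤ h) (i : Fin d) (z : Fin d → ℤ) :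
    volume (slab s h i z) = ENNReal.ofReal (h * faceArea d s) := by
  rw [slab, volume_box]
  simp_rw [add_sub_cancel_left]
  rw [← ENNReal.ofReal_prod_of_nonneg, Finset.prod_mul_distrib, Finset.prod_ite_eq']
  · simp only [Finset.prod_const, Finset.card_univ, Fintype.card_fin, Finset.mem_univ, if_true,
      faceArea]
    congr 1
    rw [inv_pow]
    ring
  · intro j _
    split_ifs <;> positivity

lemma loc_sub_single (s : ℕ) {h : ℝ} (hh : 0 < h) (hs : 2 ^ s * h < 1) (i : Fin d) (y : Ed d) :
    loc s (y - EuclideanSpace.single i h) = loc s y ∨ (y ∈ slab s h i (loc s y) ∧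
      loc s (y - EuclideanSpace.single i h) = pred (loc s y) i) := by
  have h2 : (0 : ℝ) < 2 ^ s := by positivity
  have h3 : 0 < 2 ^ s * h := by positivity
  have hne : ∀ j, j ≠ i → loc s (y - EuclideanSpace.single i h) j = loc s y j := by
    intro j hj
    simp [loc_apply, hj]
  have hi : loc s (y - EuclideanSpace.single i h) i = ⌊2 ^ s * y i - 2 ^ s * h⌋ := by
    simp [loc_apply, mul_sub]
  have hfl := Int.floor_le (2 ^ s * y i)
  have hlt := Int.lt_floor_add_one (2 ^ s * y i)
  rcases le_or_gt ((⌊2 ^ s * y i⌋ : ℝ)) (2 ^ s * y i - 2 ^ s * h) with hcase | hcase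
  · left
    ext j
    by_cases hj : j = i
    · subst hj
      rw [hi, loc_apply, Int.floor_eq_iff]
      exact ⟨hcase, by linarith⟩
    · exact hne j hj
  · right
    refine ⟨fun j => ?_, ?_⟩
    · have := mem_cell_iff.1 (rfl : y ∈ cell s (loc s y)) j
      refine ⟨this.1, ?_⟩
      split_ifs with hj
      · subst hj
        rw [loc_apply, ← mul_lt_mul_iff_right₀ h2, mul_add, mul_div_cancel₀ _ h2.ne',
          mul_inv_cancel_left₀ h2.ne']
        linarith
      · refine this.2.trans_eq ?_
        ring
    · ext j
      by_cases hj : j = i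
      · subst hj
        rw [hi, pred, Function.update_self, loc_apply, Int.floor_eq_iff]
        push_cast
        exact ⟨by linarith, by linarith⟩
      · rw [hne j hj, pred, Function.update_of_ne hj]

lemma abs_integral_step_mul_fderiv_le (s : ℕ) {U : (Fin d → ℤ) → ℝ} {B : ℝ}
    (hU : ∀ x, |U x| ≤ B) {u : Ed d → ℝ} (hu : ContDiff ℝ 1 u) (huc : HasCompactSupport u)
    (hu1 : ∀ y, |u y| ≤ 1) (i : Fin d) {Z : Finset (Fin d → ℤ)}
    (hZ : ∀ y, u y ≠ 0 → loc s y ∈ Z) :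
    |∫ y, U (loc s y) * fderiv ℝ u y (EuclideanSpace.single i 1)| ≤
      faceArea d s * ∑ z ∈ Z, jump U (pred z i, i) := by
  classical
  set v : Ed d := EuclideanSpace.single i 1 with hv
  have hv1 : ‖v‖ = 1 := by simp [hv]
  have hVm := measurable_comp_loc (d := d) s U
  obtain ⟨L, hL⟩ := hu.lipschitzWith_of_hasCompactSupport huc (by norm_num)
  have hB : 0 ≤ B := (abs_nonneg _).trans (hU 0)
  set K := cthickening 1 (tsupport u) with hK
  have hKc : IsCompact K := huc.isCompact.cthickening
  have hlim : Tendsto (fun h : ℝ => ∫ y, U (loc s y) * (h⁻¹ * (u (y + h • v) - u y))) (𝓝[>] 0)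
      (𝓝 (∫ y, U (loc s y) * fderiv ℝ u y v)) := by
    refine tendsto_integral_filter_of_dominated_convergence (K.indicator fun _ => B * L) ?_ ?_ ?_ ?_
    · refine Eventually.of_forall fun h => ?_
      refine hVm.aestronglyMeasurable.mul (Continuous.aestronglyMeasurable ?_)
      have := hu.continuous
      fun_prop
    · have hmem : Ioc (0 : ℝ) 1 ∈ 𝓝[>] (0 : ℝ) := Ioc_mem_nhdsGT one_pos
      filter_upwards [hmem] with h hh
      refine Eventually.of_forall fun y => ?_
      have hd : dist (y + h • v) y = h := by
        rw [dist_eq_norm, add_sub_cancel_left, norm_smul, hv1, mul_one, Real.norm_eq_abs,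
          abs_of_pos hh.1]
      by_cases hy : y ∈ K
      · rw [Set.indicator_of_mem hy, norm_mul, Real.norm_eq_abs]
        refine mul_le_mul (hU _) ?_ (norm_nonneg _) hB
        have h1 := hL.dist_le_mul (y + h • v) y
        rw [hd, dist_eq_norm] at h1
        rw [norm_mul, norm_inv, Real.norm_eq_abs, abs_of_pos hh.1, inv_mul_le_iff₀ hh.1]
        linarith
      · rw [Set.indicator_of_notMem hy]
        have h1 : u y = 0 := by
          by_contra h0
          exact hy (self_subset_cthickening _ (subset_tsupport u h0))
        have h2 : u (y + h • v) = 0 := by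
          by_contra h0
          refine hy (mem_cthickening_of_dist_le y (y + h • v) 1 _ (subset_tsupport u h0) ?_)
          rw [dist_comm, hd]
          exact hh.2
        simp [h1, h2]
    · exact (integrable_indicator_iff hKc.measurableSet).2
        (integrableOn_const hKc.measure_lt_top.ne)
    · refine Eventually.of_forall fun y => Tendsto.const_mul _ ?_
      have h1 : HasLineDerivAt ℝ u (fderiv ℝ u y v) y v :=
        ((hu.differentiable (by norm_num)) y).hasFDerivAt.hasLineDerivAt v
      exact (h1.tendsto_slope_zero).mono_left (nhdsWithin_mono _ fun h hh => ne_of_gt hh)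
  have hbdd : ∀ h : ℝ, 0 < h → 2 ^ s * h < 1 →
      |∫ y, U (loc s y) * (h⁻¹ * (u (y + h • v) - u y))| ≤
        faceArea d s * ∑ z ∈ Z, jump U (pred z i, i) := by
    intro h hh hsh
    have hhv : h • v = EuclideanSpace.single i h := by
      rw [hv]; ext j; simp
    have hui : Integrable u := hu.continuous.integrable_of_hasCompactSupport huc
    have hi1 : Integrable fun y => U (loc s y) * u y :=
      hui.bdd_mul hVm.aestronglyMeasurable (Eventually.of_forall fun y => hU _)
    have hi2 : Integrable fun y => U (loc s y) * u (y + h • v) :=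
      (hui.comp_add_right (h • v)).bdd_mul hVm.aestronglyMeasurable
        (Eventually.of_forall fun y => hU _)
    have hi3 : Integrable fun y => U (loc s (y - h • v)) * u y := by
      have := hi2.comp_sub_right (h • v)
      simpa using this
    have htrans : ∫ y, U (loc s y) * u (y + h • v) = ∫ y, U (loc s (y - h • v)) * u y := by
      rw [← integral_add_right_eq_self (fun y => U (loc s (y - h • v)) * u y) (h • v)]
      simp
    have heq : ∫ y, U (loc s y) * (h⁻¹ * (u (y + h • v) - u y)) =
        h⁻¹ * ∫ y, (U (loc s (y - h • v)) - U (loc s y)) * u y := by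
      have h1 : ∀ y, U (loc s y) * (h⁻¹ * (u (y + h • v) - u y)) =
        h⁻¹ * (U (loc s y) * u (y + h • v) - U (loc s y) * u y) := fun y => by ring
      simp_rw [h1, integral_const_mul, sub_mul]
      rw [integral_sub hi2 hi1, integral_sub hi3 hi1, htrans]
    have hslab : ∀ z ∈ Z, Integrable ((slab s h i z).indicator fun _ => jump U (pred z i, i)) := by
      intro z _
      refine (integrable_indicator_iff (measurableSet_slab s h i z)).2 (integrableOn_const ?_)
      rw [volume_slab s hh.le]
      exact ENNReal.ofReal_ne_top
    have hle : ‖∫ y, (U (loc s (y - h • v)) - U (loc s y)) * u y‖ ≤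
        ∫ y, ∑ z ∈ Z, (slab s h i z).indicator (fun _ => jump U (pred z i, i)) y := by
      refine norm_integral_le_of_norm_le (integrable_finsetSum _ hslab)
        (Eventually.of_forall fun y => ?_)
      have hnn : ∀ z, 0 ≤ (slab s h i z).indicator (fun _ => jump U (pred z i, i)) y := fun z =>
        Set.indicator_nonneg (fun _ _ => jump_nonneg _ _) _
      by_cases hy : u y = 0
      · rw [hy, mul_zero, norm_zero]
        exact Finset.sum_nonneg fun z _ => hnn z
      · rw [hhv]
        rcases loc_sub_single s hh hsh i y with h1 | ⟨h1, h2⟩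
        · rw [h1, sub_self, zero_mul, norm_zero]
          exact Finset.sum_nonneg fun z _ => hnn z
        · refine le_trans ?_ (Finset.single_le_sum (fun z _ => hnn z) (hZ y hy))
          rw [Set.indicator_of_mem h1, norm_mul, h2, jump, shift_pred, ← abs_sub_comm,
            Real.norm_eq_abs, Real.norm_eq_abs]
          exact mul_le_of_le_one_right (abs_nonneg _) (hu1 y)
    rw [heq, abs_mul, abs_of_pos (inv_pos.2 hh), inv_mul_le_iff₀ hh]
    refine hle.trans (le_of_eq ?_)
    rw [integral_finsetSum _ hslab, Finset.mul_sum, Finset.mul_sum]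
    refine Finset.sum_congr rfl fun z _ => ?_
    rw [integral_indicator (measurableSet_slab s h i z), setIntegral_const, Measure.real,
      volume_slab s hh.le, ENNReal.toReal_ofReal (mul_nonneg hh.le (faceArea_pos d s).le),
      smul_eq_mul]
    ring
  refine le_of_tendsto hlim.abs ?_
  have hmem : Ioo (0 : ℝ) (2 ^ s)⁻¹ ∈ 𝓝[>] (0 : ℝ) := Ioo_mem_nhdsGT (by positivity)
  filter_upwards [hmem] with h hh
  refine hbdd h hh.1 ?_
  have := hh.2
  rwa [← mul_lt_mul_iff_right₀ (show (0 : ℝ) < 2 ^ s by positivity),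
    mul_inv_cancel₀ (by positivity)] at this

end Step

/-! ### Test fields -/

section Variation

variable {d : ℕ}

/-- The admissible test fields for the variation in `Ω`. -/
def IsTestField (Ω : Set (Ed d)) (φ : Ed d → Ed d) : Prop :=
  ContDiff ℝ 1 φ ∧ HasCompactSupport φ ∧ tsupport φ ⊆ Ω ∧ ∀ x, ‖φ x‖ ≤ 1

lemma divergence_eq_zero {φ : Ed d → Ed d} {y : Ed d} (hy : y ∉ tsupport φ) :
    divergence φ y = 0 := by
  simp [divergence, fderiv_of_notMem_tsupport ℝ hy]

lemma divergence_neg (φ : Ed d → Ed d) (y : Ed d) : divergence (-φ) y = -divergence φ y := by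
  simp [divergence, fderiv_neg]

lemma divergence_add {φ ψ : Ed d → Ed d} (hφ : ContDiff ℝ 1 φ) (hψ : ContDiff ℝ 1 ψ) (y : Ed d) :
    divergence (φ + ψ) y = divergence φ y + divergence ψ y := by
  simp only [divergence]
  rw [fderiv_add (hφ.differentiable (by norm_num) y) (hψ.differentiable (by norm_num) y),
    ← Finset.sum_add_distrib]
  rfl

lemma continuous_divergence {φ : Ed d → Ed d} (hφ : ContDiff ℝ 1 φ) :
    Continuous (divergence φ) := by
  have := hφ.continuous_fderiv (by norm_num)
  unfold divergence
  fun_prop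

lemma exists_abs_divergence_le {φ : Ed d → Ed d} (hφ : ContDiff ℝ 1 φ)
    (hc : HasCompactSupport φ) : ∃ B, ∀ y, |divergence φ y| ≤ B := by
  refine (continuous_divergence hφ).bounded_above_of_compact_support ?_
  exact HasCompactSupport.intro hc.isCompact fun y hy => divergence_eq_zero hy

lemma integrable_mul_divergence {f : Ed d → ℝ} (hf : Integrable f) {φ : Ed d → Ed d}
    (hφ : ContDiff ℝ 1 φ) (hc : HasCompactSupport φ) :
    Integrable fun y => f y * divergence φ y := by
  obtain ⟨B, hB⟩ := exists_abs_divergence_le hφ hc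
  exact hf.mul_bdd (continuous_divergence hφ).aestronglyMeasurable
    (Eventually.of_forall fun y => hB y)

lemma setIntegral_mul_divergence {Ω : Set (Ed d)} {φ : Ed d → Ed d} (h : tsupport φ ⊆ Ω)
    (f : Ed d → ℝ) : ∫ y in Ω, f y * divergence φ y = ∫ y, f y * divergence φ y := by
  refine setIntegral_eq_integral_of_forall_compl_eq_zero fun y hy => ?_
  rw [divergence_eq_zero fun hy' => hy (h hy'), mul_zero]

lemma ofReal_le_var {Ω : Set (Ed d)} {φ : Ed d → Ed d} (hφ : IsTestField Ω φ) (f : Ed d → ℝ) :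
    ENNReal.ofReal (∫ y, f y * divergence φ y) ≤ var Ω f := by
  rw [← setIntegral_mul_divergence hφ.2.2.1]
  exact le_iSup₂ (f := fun φ (_ : φ ∈ {φ : Ed d → Ed d | ContDiff ℝ 1 φ ∧ HasCompactSupport φ ∧
    tsupport φ ⊆ Ω ∧ ∀ x, ‖φ x‖ ≤ 1}) =>
      ENNReal.ofReal (∫ x in Ω, f x * divergence φ x)) φ hφ

lemma var_le {Ω : Set (Ed d)} {f : Ed d → ℝ} {C : ℝ≥0∞}
    (h : ∀ φ, IsTestField Ω φ → ENNReal.ofReal (∫ y, f y * divergence φ y) ≤ C) :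
    var Ω f ≤ C := by
  refine iSup₂_le fun φ hφ => ?_
  rw [setIntegral_mul_divergence hφ.2.2.1]
  exact h φ hφ

lemma IsTestField.neg {Ω : Set (Ed d)} {φ : Ed d → Ed d} (hφ : IsTestField Ω φ) :
    IsTestField Ω (-φ) := by
  refine ⟨hφ.1.neg, hφ.2.1.neg, ?_, fun x => ?_⟩
  · rw [tsupport, Function.support_neg]
    exact hφ.2.2.1
  · simpa using hφ.2.2.2 x

lemma ofReal_abs_le_var {Ω : Set (Ed d)} {φ : Ed d → Ed d} (hφ : IsTestField Ω φ)
    (f : Ed d → ℝ) : ENNReal.ofReal |∫ y, f y * divergence φ y| ≤ var Ω f := by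
  rcases abs_choice (∫ y, f y * divergence φ y) with h | h
  · rw [h]
    exact ofReal_le_var hφ f
  · rw [h, ← integral_neg]
    simpa [divergence_neg] using ofReal_le_var hφ.neg f

lemma IsTestField.mono {A Ω : Set (Ed d)} (h : A ⊆ Ω) {φ : Ed d → Ed d} (hφ : IsTestField A φ) :
    IsTestField Ω φ :=
  ⟨hφ.1, hφ.2.1, hφ.2.2.1.trans h, hφ.2.2.2⟩

lemma isTestField_zero (Ω : Set (Ed d)) : IsTestField Ω (0 : Ed d → Ed d) := by
  refine ⟨contDiff_const, HasCompactSupport.zero, ?_, fun x => by simp⟩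
  simp [tsupport]

lemma IsTestField.add {A B Ω : Set (Ed d)} (hA : A ⊆ Ω) (hB : B ⊆ Ω) (hAB : Disjoint A B)
    {φ ψ : Ed d → Ed d} (hφ : IsTestField A φ) (hψ : IsTestField B ψ) :
    IsTestField Ω (φ + ψ) := by
  refine ⟨hφ.1.add hψ.1, hφ.2.1.add hψ.2.1, (tsupport_add _ _).trans
    (Set.union_subset (hφ.2.2.1.trans hA) (hψ.2.2.1.trans hB)), fun x => ?_⟩
  by_cases hx : x ∈ A
  · have : ψ x = 0 := by
      by_contra h
      exact Set.disjoint_left.1 hAB hx (hψ.2.2.1 (subset_tsupport ψ h))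
    simpa [this] using hφ.2.2.2 x
  · have : φ x = 0 := by
      by_contra h
      exact hx (hφ.2.2.1 (subset_tsupport φ h))
    simpa [this] using hψ.2.2.2 x

lemma var_add_var_le {A B Ω : Set (Ed d)} (hA : A ⊆ Ω) (hB : B ⊆ Ω) (hAB : Disjoint A B)
    {f : Ed d → ℝ} (hf : Integrable f) : var A f + var B f ≤ var Ω f := by
  refine ENNReal.biSup_add_biSup_le' ⟨0, isTestField_zero A⟩ ⟨0, isTestField_zero B⟩
    fun φ (hφ : IsTestField A φ) ψ (hψ : IsTestField B ψ) => ?_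
  rw [setIntegral_mul_divergence hφ.2.2.1, setIntegral_mul_divergence hψ.2.2.1]
  rcases le_or_gt (∫ y, f y * divergence φ y) 0 with h | h
  · rw [ENNReal.ofReal_of_nonpos h, zero_add]
    exact ofReal_le_var (hψ.mono hB) f
  rcases le_or_gt (∫ y, f y * divergence ψ y) 0 with h' | h'
  · rw [ENNReal.ofReal_of_nonpos h', add_zero]
    exact ofReal_le_var (hφ.mono hA) f
  rw [← ENNReal.ofReal_add h.le h'.le, ← integral_add (integrable_mul_divergence hf hφ.1 hφ.2.1)
    (integrable_mul_divergence hf hψ.1 hψ.2.1)]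
  refine le_of_eq_of_le ?_ (ofReal_le_var (hφ.add hA hB hAB hψ) f)
  simp_rw [divergence_add hφ.1 hψ.1, mul_add]

lemma sum_var_le {ι : Type*} {s : Finset ι} {A : ι → Set (Ed d)} {Ω : Set (Ed d)}
    (hA : ∀ k ∈ s, A k ⊆ Ω) (hdisj : (s : Set ι).PairwiseDisjoint A)
    {f : Ed d → ℝ} (hf : Integrable f) : ∑ k ∈ s, var (A k) f ≤ var Ω f := by
  classical
  induction s using Finset.induction_on generalizing Ω with
  | empty => simp
  | insert k s hk ih =>
    rw [Finset.sum_insert hk]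
    have h1 : ∑ j ∈ s, var (A j) f ≤ var (⋃ j ∈ s, A j) f :=
      ih (fun j hj => Set.subset_biUnion_of_mem (u := A) hj)
        (hdisj.subset (by simp))
    refine (add_le_add le_rfl h1).trans (var_add_var_le (hA k (by simp))
      (Set.iUnion₂_subset fun j hj => hA j (by simp [hj])) ?_ hf)
    rw [Set.disjoint_iUnion₂_right]
    intro j hj
    refine hdisj (by simp) (by simp [hj]) ?_
    rintro rfl
    exact hk hj

/-! ### Test fields adapted to pairs of adjacent cells -/

/-- Smooth functions supported inside the unit interval which increase to its indicator. -/
def bump (n : ℕ) (t : ℝ) : ℝ :=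
  Real.smoothTransition (n * t - 1) * Real.smoothTransition (n * (1 - t) - 1)

/-- The integral of `bump n` over `[t - 1, t]`. -/
def tent (n : ℕ) (t : ℝ) : ℝ := (∫ r in (0 : ℝ)..t, bump n r) - ∫ r in (0 : ℝ)..(t - 1), bump n r

lemma contDiff_bump (n : ℕ) : ContDiff ℝ 1 (bump n) := by
  have := Real.smoothTransition.contDiff (n := 1)
  unfold bump
  exact (this.comp (by fun_prop)).mul (this.comp (by fun_prop))

lemma bump_nonneg (n : ℕ) (t : ℝ) : 0 ≤ bump n t :=
  mul_nonneg (Real.smoothTransition.nonneg _) (Real.smoothTransition.nonneg _)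

lemma bump_le_one (n : ℕ) (t : ℝ) : bump n t ≤ 1 :=
  mul_le_one₀ (Real.smoothTransition.le_one _) (Real.smoothTransition.nonneg _)
    (Real.smoothTransition.le_one _)

lemma bump_ne_zero {n : ℕ} {t : ℝ} (h : bump n t ≠ 0) : 1 < n * t ∧ 1 < n * (1 - t) := by
  unfold bump at h
  refine ⟨?_, ?_⟩
  · by_contra! h'
    exact h (by rw [Real.smoothTransition.zero_of_nonpos (by linarith), zero_mul])
  · by_contra! h'
    refine h ?_
    rw [Real.smoothTransition.zero_of_nonpos (x := n * (1 - t) - 1) (by linarith), mul_zero]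

lemma bump_eq_zero (n : ℕ) {t : ℝ} (h : t ∉ Ioo (0 : ℝ) 1) : bump n t = 0 := by
  by_contra h'
  have h1 := bump_ne_zero h'
  have hn : (0 : ℝ) ≤ n := Nat.cast_nonneg n
  refine h ⟨?_, ?_⟩
  · by_contra! ht
    linarith [mul_nonpos_of_nonneg_of_nonpos hn ht]
  · by_contra! ht
    linarith [mul_nonpos_of_nonneg_of_nonpos hn (show 1 - t ≤ 0 by linarith)]

lemma tendsto_bump {t : ℝ} (h : t ∈ Ioo (0 : ℝ) 1) : Tendsto (fun n => bump n t) atTop (𝓝 1) := by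
  have key : ∀ r : ℝ, 0 < r → ∀ᶠ n : ℕ in atTop, Real.smoothTransition (n * r - 1) = 1 := by
    intro r hr
    filter_upwards [(tendsto_natCast_atTop_atTop.atTop_mul_const hr).eventually_ge_atTop 2]
      with n hn
    exact Real.smoothTransition.one_of_one_le (by linarith)
  refine tendsto_const_nhds.congr' ?_
  filter_upwards [key t h.1, key (1 - t) (by linarith [h.2])] with n h1 h2
  rw [bump, h1, h2, one_mul]

lemma hasDerivAt_tent (n : ℕ) (t : ℝ) : HasDerivAt (tent n) (bump n t - bump n (t - 1)) t := by
  have hc := (contDiff_bump n).continuous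
  have h : ∀ t, HasDerivAt (fun t => ∫ r in (0 : ℝ)..t, bump n r) (bump n t) t := fun t =>
    intervalIntegral.integral_hasDerivAt_right (hc.intervalIntegrable _ _)
      (hc.stronglyMeasurableAtFilter _ _) hc.continuousAt
  exact (h t).sub ((h (t - 1)).comp_sub_const t 1)

lemma contDiff_tent (n : ℕ) : ContDiff ℝ 1 (tent n) := by
  have hc := (contDiff_bump n).continuous
  rw [contDiff_one_iff_deriv]
  refine ⟨fun t => (hasDerivAt_tent n t).differentiableAt, ?_⟩
  rw [show deriv (tent n) = fun t => bump n t - bump n (t - 1) from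
    funext fun t => (hasDerivAt_tent n t).deriv]
  fun_prop

lemma tent_eq (n : ℕ) (t : ℝ) : tent n t = ∫ r in (t - 1)..t, bump n r := by
  have hc := (contDiff_bump n).continuous
  exact intervalIntegral.integral_interval_sub_left (hc.intervalIntegrable _ _)
    (hc.intervalIntegrable _ _)

lemma tent_nonneg (n : ℕ) (t : ℝ) : 0 ≤ tent n t := by
  rw [tent_eq]
  exact intervalIntegral.integral_nonneg (by linarith) fun r _ => bump_nonneg n r

lemma tent_le_one (n : ℕ) (t : ℝ) : tent n t ≤ 1 := by
  rw [tent_eq]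
  have h := intervalIntegral.integral_mono_on (a := t - 1) (b := t) (μ := volume) (by linarith)
    ((contDiff_bump n).continuous.intervalIntegrable _ _)
    (continuous_const.intervalIntegrable (_ : ℝ) _) fun r _ => bump_le_one n r
  simpa using h

lemma tent_ne_zero {n : ℕ} {t : ℝ} (h : tent n t ≠ 0) : 1 ≤ n * t ∧ 1 ≤ n * (2 - t) := by
  have hn : (0 : ℝ) ≤ n := Nat.cast_nonneg n
  have key : ∃ r ∈ Icc (t - 1) t, bump n r ≠ 0 := by
    by_contra! h'
    refine h ?_
    rw [tent_eq, intervalIntegral.integral_congr (g := fun _ => 0)]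
    · simp
    · intro r hr
      rw [uIcc_of_le (by linarith)] at hr
      exact h' r hr
  obtain ⟨r, hr, hr0⟩ := key
  have h1 := bump_ne_zero hr0
  exact ⟨h1.1.le.trans (mul_le_mul_of_nonneg_left hr.2 hn),
    h1.2.le.trans (mul_le_mul_of_nonneg_left (by linarith [hr.1]) hn)⟩

/-- A smooth approximation of the indicator of a cell. -/
def cellBump (s n : ℕ) (x : Fin d → ℤ) (y : Ed d) : ℝ := ∏ j, bump n (2 ^ s * y j - x j)

/-- A function whose derivative in direction `i` is a difference of two adjacent cell bumps. -/
def edgeBump (s n : ℕ) (x : Fin d → ℤ) (i : Fin d) (y : Ed d) : ℝ :=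
  tent n (2 ^ s * y i - x i) * ∏ j ∈ Finset.univ.erase i, bump n (2 ^ s * y j - x j)

/-- The interior of the union of a cell and its neighbour in the positive `i`-th direction. -/
def edgeBox (s : ℕ) (e : (Fin d → ℤ) × Fin d) : Set (Ed d) :=
  {y | ∀ j, 0 < 2 ^ s * y j - e.1 j ∧ 2 ^ s * y j - e.1 j < if j = e.2 then 2 else 1}

lemma contDiff_edgeBump (s n : ℕ) (x : Fin d → ℤ) (i : Fin d) :
    ContDiff ℝ 1 (edgeBump s n x i) := by
  unfold edgeBump
  have h : ∀ j, ContDiff ℝ 1 fun y : Ed d => 2 ^ s * y j - x j := fun j => by fun_prop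
  exact ((contDiff_tent n).comp (h i)).mul
    (contDiff_prod fun j _ => (contDiff_bump n).comp (h j))

lemma continuous_cellBump (s n : ℕ) (x : Fin d → ℤ) : Continuous (cellBump s n x) := by
  unfold cellBump
  have := (contDiff_bump n).continuous
  fun_prop

lemma fderiv_edgeBump (s n : ℕ) (x : Fin d → ℤ) (i : Fin d) (y : Ed d) :
    fderiv ℝ (edgeBump s n x i) y (EuclideanSpace.single i 1) =
      2 ^ s * (cellBump s n x y - cellBump s n (shift x i) y) := by
  rw [← ((contDiff_edgeBump s n x i).differentiable (by norm_num) y).lineDeriv_eq_fderiv]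
  refine HasLineDerivAt.lineDeriv ?_
  have h1 : ∀ t : ℝ, edgeBump s n x i (y + t • EuclideanSpace.single i 1) =
      tent n (2 ^ s * (y i + t) - x i) *
        ∏ j ∈ Finset.univ.erase i, bump n (2 ^ s * y j - x j) := by
    intro t
    unfold edgeBump
    congr 1
    · simp
    · refine Finset.prod_congr rfl fun j hj => ?_
      simp [Finset.ne_of_mem_erase hj]
  have h2 : HasDerivAt (fun t : ℝ => 2 ^ s * (y i + t) - (x i : ℝ)) (2 ^ s) 0 := by
    simpa using (((hasDerivAt_id (0 : ℝ)).const_add (y i)).const_mul ((2 : ℝ) ^ s)).sub_const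
      (x i : ℝ)
  have h3 := (hasDerivAt_tent n (2 ^ s * (y i + 0) - x i)).comp (0 : ℝ) h2
  have h4 := h3.mul_const (∏ j ∈ Finset.univ.erase i, bump n (2 ^ s * y j - x j))
  unfold HasLineDerivAt
  simp_rw [h1]
  refine h4.congr_deriv ?_
  simp only [cellBump]
  rw [← Finset.mul_prod_erase _ _ (Finset.mem_univ i),
    ← Finset.mul_prod_erase (a := i) _ (fun j => bump n (2 ^ s * y j - (shift x i j : ℝ)))
      (Finset.mem_univ i)]
  have h5 : ∏ j ∈ Finset.univ.erase i, bump n (2 ^ s * y j - (shift x i j : ℝ)) =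
      ∏ j ∈ Finset.univ.erase i, bump n (2 ^ s * y j - x j) := by
    refine Finset.prod_congr rfl fun j hj => ?_
    rw [shift, Function.update_of_ne (Finset.ne_of_mem_erase hj)]
  rw [h5, shift, Function.update_self]
  push_cast
  rw [add_zero, sub_sub]
  ring

lemma abs_edgeBump_le_one (s n : ℕ) (x : Fin d → ℤ) (i : Fin d) (y : Ed d) :
    |edgeBump s n x i y| ≤ 1 := by
  have h : 0 ≤ ∏ j ∈ Finset.univ.erase i, bump n (2 ^ s * y j - x j) :=
    Finset.prod_nonneg fun j _ => bump_nonneg _ _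
  rw [edgeBump, abs_of_nonneg (mul_nonneg (tent_nonneg _ _) h)]
  exact mul_le_one₀ (tent_le_one _ _) h
    (Finset.prod_le_one (fun j _ => bump_nonneg _ _) fun j _ => bump_le_one _ _)

lemma edgeBump_support (s n : ℕ) (x : Fin d → ℤ) (i : Fin d) :
    ∃ K ⊆ edgeBox s (x, i), IsCompact K ∧ Function.support (edgeBump s n x i) ⊆ K := by
  set K : Set (Ed d) := {y | ∀ j, 1 ≤ n * (2 ^ s * y j - x j) ∧
    1 ≤ n * ((if j = i then 2 else 1) - (2 ^ s * y j - x j))} with hK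
  have hn : (0 : ℝ) ≤ n := Nat.cast_nonneg n
  have hsub : K ⊆ edgeBox s (x, i) := by
    intro y hy j
    obtain ⟨h1, h2⟩ := hy j
    refine ⟨?_, ?_⟩
    · by_contra! h
      linarith [mul_nonpos_of_nonneg_of_nonpos hn h]
    · by_contra! h
      linarith [mul_nonpos_of_nonneg_of_nonpos hn (sub_nonpos.2 h)]
  refine ⟨K, hsub, Metric.isCompact_of_isClosed_isBounded ?_ ?_, ?_⟩
  · simp only [hK, Set.ofPred_forall, Set.ofPred_and]
    refine isClosed_iInter fun j => (isClosed_le ?_ ?_).inter (isClosed_le ?_ ?_) <;> fun_prop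
  · refine (Metric.isBounded_closedBall (x := WithLp.toLp 2 fun j => (x j : ℝ) / 2 ^ s)
      (r := d * (2 / 2 ^ s))).subset fun y hy => ?_
    rw [mem_closedBall, dist_eq_norm]
    refine norm_sub_le_of_abs_le fun j => ?_
    obtain ⟨h1, h2⟩ := hsub hy j
    have h3 : 2 ^ s * y j - x j < 2 := h2.trans_le (by split_ifs <;> norm_num)
    have h4 : y j - x j / 2 ^ s = (2 ^ s * y j - x j) / 2 ^ s := by field_simp
    simp only at h1
    simp only
    rw [h4, abs_div, abs_of_pos h1, abs_of_pos (by positivity : (0 : ℝ) < 2 ^ s)]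
    gcongr
  · intro y hy j
    rw [Function.mem_support, edgeBump, mul_ne_zero_iff, Finset.prod_ne_zero_iff] at hy
    by_cases hj : j = i
    · subst hj
      simpa using tent_ne_zero hy.1
    · have := bump_ne_zero (hy.2 j (Finset.mem_erase.2 ⟨hj, Finset.mem_univ j⟩))
      simpa [hj] using ⟨this.1.le, this.2.le⟩

/-- The vector field with `i`-th component `u` and all other components zero. -/
def single (u : Ed d → ℝ) (i : Fin d) (y : Ed d) : Ed d := u y • EuclideanSpace.single i 1

lemma divergence_single {u : Ed d → ℝ} (hu : ContDiff ℝ 1 u) (i : Fin d) (y : Ed d) :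
    divergence (single u i) y = fderiv ℝ u y (EuclideanSpace.single i 1) := by
  simp only [divergence]
  rw [show fderiv ℝ (single u i) y = (fderiv ℝ u y).smulRight (EuclideanSpace.single i 1) from
    (((hu.differentiable (by norm_num) y).hasFDerivAt).smul_const _).fderiv]
  rw [Finset.sum_eq_single i]
  · simp
  · intro j _ hj
    simp [hj]
  · simp

lemma isTestField_edgeBump (s n : ℕ) (e : (Fin d → ℤ) × Fin d) :
    IsTestField (edgeBox s e) (single (edgeBump s n e.1 e.2) e.2) := by
  obtain ⟨K, hKb, hK, hs⟩ := edgeBump_support s n e.1 e.2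
  have hsupp : Function.support (single (edgeBump s n e.1 e.2) e.2) ⊆ K := by
    refine subset_trans (fun y hy => ?_) hs
    rw [Function.mem_support] at hy ⊢
    exact fun h => hy (by rw [single, h, zero_smul])
  refine ⟨(contDiff_edgeBump s n e.1 e.2).smul contDiff_const,
    HasCompactSupport.of_support_subset_isCompact hK hsupp,
    (closure_minimal hsupp hK.isClosed).trans hKb, fun y => ?_⟩
  rw [single, norm_smul]
  simpa using abs_edgeBump_le_one s n e.1 e.2 y

lemma ae_ne (j : Fin d) (c : ℝ) : ∀ᵐ y : Ed d, y j ≠ c := by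
  have h := (EuclideanSpace.volume_preserving_symm_measurableEquiv_toLp
    (Fin d)).quasiMeasurePreserving.ae (Measure.ae_eval_ne (μ := fun _ : Fin d => volume) j c)
  exact h

lemma ae_coord_ne (s : ℕ) (x : Fin d → ℤ) : ∀ᵐ y : Ed d, ∀ j, 2 ^ s * y j - x j ≠ 0 := by
  rw [ae_all_iff]
  intro j
  filter_upwards [ae_ne j (x j / 2 ^ s)] with y hy h
  refine hy ?_
  rw [eq_div_iff (by positivity)]
  linarith

lemma tendsto_integral_mul_cellBump {f : Ed d → ℝ} (hf : Integrable f) (s : ℕ)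
    (x : Fin d → ℤ) : Tendsto (fun n => ∫ y, f y * cellBump s n x y) atTop
      (𝓝 (∫ y in cell s x, f y)) := by
  rw [← integral_indicator (measurableSet_cell s x)]
  refine tendsto_integral_of_dominated_convergence (fun y => |f y|) ?_ hf.abs ?_ ?_
  · exact fun n => hf.aestronglyMeasurable.mul (continuous_cellBump s n x).aestronglyMeasurable
  · refine fun n => Eventually.of_forall fun y => ?_
    rw [norm_mul, Real.norm_eq_abs, Real.norm_eq_abs]
    refine mul_le_of_le_one_right (abs_nonneg _) ?_
    rw [cellBump, abs_of_nonneg (Finset.prod_nonneg fun j _ => bump_nonneg _ _)]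
    exact Finset.prod_le_one (fun j _ => bump_nonneg _ _) fun j _ => bump_le_one _ _
  · filter_upwards [ae_coord_ne s x] with y hy
    have hfl : ∀ j, ⌊2 ^ s * y j⌋ = x j ↔ 0 ≤ 2 ^ s * y j - x j ∧ 2 ^ s * y j - x j < 1 := by
      intro j
      rw [Int.floor_eq_iff, sub_nonneg, sub_lt_iff_lt_add']
    by_cases h : y ∈ cell s x
    · rw [Set.indicator_of_mem h]
      have h1 : Tendsto (fun n => cellBump s n x y) atTop (𝓝 (∏ _j : Fin d, 1)) := by
        refine tendsto_finsetProd _ fun j _ => tendsto_bump ?_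
        have := (hfl j).1 (congrFun (mem_cell.1 h) j)
        exact ⟨lt_of_le_of_ne this.1 (hy j).symm, this.2⟩
      simpa using h1.const_mul (f y)
    · rw [Set.indicator_of_notMem h]
      have h1 : ∃ j, 2 ^ s * y j - x j ∉ Ioo (0 : ℝ) 1 := by
        by_contra! h'
        exact h (mem_cell.2 (funext fun j => (hfl j).2 ⟨(h' j).1.le, (h' j).2⟩))
      obtain ⟨j, hj⟩ := h1
      have h2 : ∀ n, cellBump s n x y = 0 := fun n =>
        Finset.prod_eq_zero (Finset.mem_univ j) (bump_eq_zero n hj)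
      simp [h2]

/-- The difference of the averages over adjacent cells is controlled by the variation. -/
lemma ofReal_jump_le_var {f : Ed d → ℝ} (hf : Integrable f) (s : ℕ)
    (e : (Fin d → ℤ) × Fin d) :
    ENNReal.ofReal (faceArea d s * jump (cellAvg s f) e) ≤ var (edgeBox s e) f := by
  have hint : ∀ n x, Integrable fun y => f y * cellBump s n x y := by
    intro n x
    refine hf.mul_bdd (c := 1) (continuous_cellBump s n x).aestronglyMeasurable
      (Eventually.of_forall fun y => ?_)
    rw [Real.norm_eq_abs, cellBump, abs_of_nonneg (Finset.prod_nonneg fun j _ => bump_nonneg _ _)]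
    exact Finset.prod_le_one (fun j _ => bump_nonneg _ _) fun j _ => bump_le_one _ _
  have hI : ∀ n, ∫ y, f y * divergence (single (edgeBump s n e.1 e.2) e.2) y =
      2 ^ s * ((∫ y, f y * cellBump s n e.1 y) - ∫ y, f y * cellBump s n (shift e.1 e.2) y) := by
    intro n
    simp_rw [divergence_single (contDiff_edgeBump s n e.1 e.2), fderiv_edgeBump]
    rw [← integral_sub (hint _ _) (hint _ _), ← integral_const_mul]
    congr 1
    ext y
    ring
  have hlim := ((tendsto_integral_mul_cellBump hf s e.1).sub
    (tendsto_integral_mul_cellBump hf s (shift e.1 e.2))).const_mul ((2 : ℝ) ^ s)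
  simp_rw [← hI] at hlim
  have heq : faceArea d s * jump (cellAvg s f) e =
      |2 ^ s * ((∫ y in cell s e.1, f y) - ∫ y in cell s (shift e.1 e.2), f y)| := by
    rw [jump, abs_sub_comm, cellAvg, cellAvg, ← mul_sub, abs_mul, abs_mul, faceArea,
      abs_of_pos (by positivity : (0 : ℝ) < (2 ^ s) ^ d),
      abs_of_pos (by positivity : (0 : ℝ) < 2 ^ s), ← mul_assoc,
      div_mul_cancel₀ _ (by positivity)]
  rw [heq]
  refine le_of_tendsto ((ENNReal.continuous_ofReal.tendsto _).comp hlim.abs)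
    (Eventually.of_forall fun n => ?_)
  exact ofReal_abs_le_var (isTestField_edgeBump s n e) f


/-! ### Sums of jumps and the variation -/

lemma disjoint_edgeBox (s : ℕ) {e e' : (Fin d → ℤ) × Fin d} (hdir : e.2 = e'.2)
    (hpar : e.1 e.2 % 2 = e'.1 e'.2 % 2) (hne : e ≠ e') :
    Disjoint (edgeBox s e) (edgeBox s e') := by
  rw [Set.disjoint_left]
  intro y hy hy'
  refine hne (Prod.ext (funext fun j => ?_) hdir)
  have h1 := hy j
  have h2 := hy' j
  rw [← hdir] at h2 hpar
  by_cases hj : j = e.2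
  · rw [if_pos hj] at h1 h2
    have h3 : e.1 j - e'.1 j < 2 := by exact_mod_cast (by linarith : (e.1 j : ℝ) - e'.1 j < 2)
    have h4 : e'.1 j - e.1 j < 2 := by exact_mod_cast (by linarith : (e'.1 j : ℝ) - e.1 j < 2)
    rw [← hj] at hpar
    omega
  · rw [if_neg hj] at h1 h2
    have h3 : e.1 j - e'.1 j < 1 := by exact_mod_cast (by linarith : (e.1 j : ℝ) - e'.1 j < 1)
    have h4 : e'.1 j - e.1 j < 1 := by exact_mod_cast (by linarith : (e'.1 j : ℝ) - e.1 j < 1)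
    omega

lemma ofReal_sum_jump_le {f : Ed d → ℝ} (hf : Integrable f) (s : ℕ)
    {𝓔 : Finset ((Fin d → ℤ) × Fin d)} {Ω : Set (Ed d)} (h : ∀ e ∈ 𝓔, edgeBox s e ⊆ Ω) :
    ENNReal.ofReal (faceArea d s * ∑ e ∈ 𝓔, jump (cellAvg s f) e) ≤ 2 * d * var Ω f := by
  have hpos := (faceArea_pos d s).le
  rw [Finset.mul_sum, ENNReal.ofReal_sum_of_nonneg fun e _ => mul_nonneg hpos (jump_nonneg _ e)]
  refine (Finset.sum_le_sum fun e _ => ofReal_jump_le_var hf s e).trans ?_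
  rw [← Finset.sum_fiberwise 𝓔 fun e => (e.2, decide (e.1 e.2 % 2 = 0))]
  refine (Finset.sum_le_card_nsmul _ _ (var Ω f) fun c _ => ?_).trans (le_of_eq ?_)
  · refine sum_var_le (fun e he => h e (Finset.mem_filter.1 he).1) ?_ hf
    intro e he e' he' hne
    have h1 := (Finset.mem_filter.1 he).2.trans (Finset.mem_filter.1 he').2.symm
    rw [Prod.mk.injEq, decide_eq_decide] at h1
    refine disjoint_edgeBox s h1.1 ?_ hne
    omega
  · simp [mul_comm]

lemma isOpen_edgeBox (s : ℕ) (e : (Fin d → ℤ) × Fin d) : IsOpen (edgeBox s e) := by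
  simp only [edgeBox, Set.ofPred_forall, Set.ofPred_and]
  refine isOpen_iInter_of_finite fun j => (isOpen_lt ?_ ?_).inter (isOpen_lt ?_ ?_) <;> fun_prop

lemma loc_of_mem_edgeBox {s : ℕ} {e : (Fin d → ℤ) × Fin d} {y : Ed d} (hy : y ∈ edgeBox s e) :
    loc s y = e.1 ∨ loc s y = shift e.1 e.2 := by
  have h1 : ∀ j, j ≠ e.2 → loc s y j = e.1 j := by
    intro j hj
    have h := hy j
    rw [if_neg hj] at h
    rw [loc_apply, Int.floor_eq_iff]
    constructor <;> linarith
  have h2 := hy e.2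
  rw [if_pos rfl] at h2
  rcases lt_or_ge (2 ^ s * y e.2) (e.1 e.2 + 1) with h | h
  · left
    ext j
    by_cases hj : j = e.2
    · rw [hj, loc_apply, Int.floor_eq_iff]
      constructor <;> linarith
    · exact h1 j hj
  · right
    ext j
    by_cases hj : j = e.2
    · rw [hj, loc_apply, Int.floor_eq_iff, shift, Function.update_self]
      push_cast
      constructor <;> linarith
    · rw [h1 j hj, shift, Function.update_of_ne hj]

lemma edgeBox_subset_interior_cube (s : ℕ) {Q : ℕ × (Fin d → ℤ)} {e : (Fin d → ℤ) × Fin d}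
    (he : e ∈ edges Q) : edgeBox s e ⊆ interior (cube s Q) := by
  refine interior_maximal (fun y hy => ?_) (isOpen_edgeBox s e)
  rw [mem_edges] at he
  change loc s y ∈ cells Q
  rcases loc_of_mem_edgeBox hy with h | h
  · rw [h]; exact he.1
  · rw [h]; exact he.2

lemma dist_le_of_mem_edgeBox {s : ℕ} {y w : Ed d} {i : Fin d}
    (hw : w ∈ edgeBox s (pred (loc s y) i, i)) : dist w y ≤ d * (2 / 2 ^ s) := by
  rw [dist_eq_norm]
  refine norm_sub_le_of_abs_le fun j => ?_
  have h := hw j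
  have h1 := Int.floor_le (2 ^ s * y j)
  have h2 := Int.lt_floor_add_one (2 ^ s * y j)
  rw [← loc_apply] at h1 h2
  rw [le_div_iff₀ (by positivity), ← abs_of_pos (by positivity : (0 : ℝ) < 2 ^ s), ← abs_mul,
    abs_le]
  by_cases hj : j = i
  · subst hj
    simp only [pred, Function.update_self, if_true] at h
    push_cast at h
    constructor <;> linarith
  · simp only [pred, Function.update_of_ne hj, if_neg hj] at h
    constructor <;> linarith

lemma fderiv_coord {φ : Ed d → Ed d} (hφ : ContDiff ℝ 1 φ) (i : Fin d) (y v : Ed d) :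
    fderiv ℝ (fun y => φ y i) y v = fderiv ℝ φ y v i := by
  have h := (EuclideanSpace.proj i : Ed d →L[ℝ] ℝ).hasFDerivAt.comp y
    (hφ.differentiable (by norm_num) y).hasFDerivAt
  have h' : fderiv ℝ (fun y => φ y i) y = _ := h.fderiv
  rw [h']
  rfl

lemma abs_integral_step_mul_divergence_le (s : ℕ) {U : (Fin d → ℤ) → ℝ} {B : ℝ}
    (hU : ∀ x, |U x| ≤ B) {φ : Ed d → Ed d} (hφ : ContDiff ℝ 1 φ) (hc : HasCompactSupport φ)
    (h1 : ∀ y, ‖φ y‖ ≤ 1) {Z : Finset (Fin d → ℤ)} (hZ : ∀ y ∈ tsupport φ, loc s y ∈ Z) :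
    |∫ y, U (loc s y) * divergence φ y| ≤ faceArea d s *
      ∑ e ∈ (Z ×ˢ Finset.univ).image fun p => (pred p.1 p.2, p.2), jump U e := by
  have hu : ∀ i, ContDiff ℝ 1 fun y => φ y i := fun i => by fun_prop
  have huc : ∀ i, HasCompactSupport fun y => φ y i := fun i =>
    hc.comp_left (g := fun v : Ed d => v i) rfl
  have hint : ∀ i, Integrable fun y =>
      U (loc s y) * fderiv ℝ (fun y => φ y i) y (EuclideanSpace.single i 1) := by
    intro i
    refine Integrable.bdd_mul (c := B) ?_ (measurable_comp_loc s U).aestronglyMeasurable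
      (Eventually.of_forall fun y => hU _)
    refine Continuous.integrable_of_hasCompactSupport
      (((hu i).continuous_fderiv (by norm_num)).clm_apply continuous_const) ?_
    exact ((huc i).fderiv ℝ).comp_left (g := fun L : Ed d →L[ℝ] ℝ => L (EuclideanSpace.single i 1))
      rfl
  have hsum : ∫ y, U (loc s y) * divergence φ y =
      ∑ i, ∫ y, U (loc s y) * fderiv ℝ (fun y => φ y i) y (EuclideanSpace.single i 1) := by
    rw [← integral_finsetSum _ fun i _ => hint i]
    simp_rw [divergence, Finset.mul_sum, fderiv_coord hφ]
  rw [hsum, Finset.sum_image, Finset.sum_product_right, Finset.mul_sum]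
  · refine (Finset.abs_sum_le_sum_abs _ _).trans (Finset.sum_le_sum fun i _ => ?_)
    refine abs_integral_step_mul_fderiv_le s hU (hu i) (huc i)
      (fun y => (PiLp.norm_apply_le (φ y) i).trans (h1 y)) i fun y hy => hZ y ?_
    refine subset_tsupport φ fun h => hy ?_
    rw [h]
    rfl
  · rintro ⟨z, i⟩ _ ⟨z', i'⟩ _ h
    simp only [Prod.mk.injEq] at h
    obtain ⟨h, rfl⟩ := h
    rw [← shift_pred z i, h, shift_pred]

/-! ### Discretization of the maximal function -/

/-- The maximal function of a function on the grid. -/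
def gridMax (𝒬 : Finset (ℕ × (Fin d → ℤ))) (F : (Fin d → ℤ) → ℝ) (x : Fin d → ℤ) : ℝ :=
  sSup ({F x} ∪ {v | ∃ Q ∈ 𝒬, x ∈ cells Q ∧ v = avg F Q})

lemma finite_gridMax (𝒬 : Finset (ℕ × (Fin d → ℤ))) (F : (Fin d → ℤ) → ℝ) (x : Fin d → ℤ) :
    {v | ∃ Q ∈ 𝒬, x ∈ cells Q ∧ v = avg F Q}.Finite := by
  refine (𝒬.finite_toSet.image (avg F)).subset ?_
  rintro v ⟨Q, hQ, -, rfl⟩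
  exact ⟨Q, hQ, rfl⟩

lemma isMaxFun_gridMax (𝒬 : Finset (ℕ × (Fin d → ℤ))) (F : (Fin d → ℤ) → ℝ) :
    IsMaxFun 𝒬 F (gridMax 𝒬 F) := by
  intro x μ
  rw [gridMax, lt_csSup_iff ((Set.finite_singleton _).union (finite_gridMax 𝒬 F x)).bddAbove
    ⟨F x, Or.inl rfl⟩]
  constructor
  · rintro ⟨v, rfl | ⟨Q, hQ, hx, rfl⟩, hv⟩
    · exact Or.inl hv
    · exact Or.inr ⟨Q, hQ, hx, hv⟩
  · rintro (h | ⟨Q, hQ, hx, hv⟩)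
    · exact ⟨_, Or.inl rfl, h⟩
    · exact ⟨_, Or.inr ⟨Q, hQ, hx, rfl⟩, hv⟩

lemma abs_gridMax_le (𝒬 : Finset (ℕ × (Fin d → ℤ))) {F : (Fin d → ℤ) → ℝ} {B : ℝ}
    (hF : ∀ x, |F x| ≤ B) (x : Fin d → ℤ) : |gridMax 𝒬 F x| ≤ B + ∑ Q ∈ 𝒬, |avg F Q| := by
  have hmem := Set.Nonempty.csSup_mem ⟨F x, Or.inl rfl⟩
    ((Set.finite_singleton (F x)).union (finite_gridMax 𝒬 F x))
  have h0 : 0 ≤ ∑ Q ∈ 𝒬, |avg F Q| := Finset.sum_nonneg fun _ _ => abs_nonneg _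
  rcases hmem with h | ⟨Q, hQ, -, h⟩
  · rw [gridMax, show sSup _ = F x from h]
    linarith [hF x]
  · rw [gridMax, h]
    have := Finset.single_le_sum (f := fun Q => |avg F Q|) (fun _ _ => abs_nonneg _) hQ
    linarith [abs_nonneg (F x), hF x]

lemma abs_sSup_sub_sSup_le {S : Set ℝ} (hS : S.Finite) (a b : ℝ) :
    |sSup ({a} ∪ S) - sSup ({b} ∪ S)| ≤ |a - b| := by
  rcases S.eq_empty_or_nonempty with rfl | hne
  · simp
  · rw [csSup_union (bddAbove_singleton) (Set.singleton_nonempty a) hS.bddAbove hne,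
      csSup_union (bddAbove_singleton) (Set.singleton_nonempty b) hS.bddAbove hne,
      csSup_singleton, csSup_singleton]
    exact abs_max_sub_max_le_abs _ _ _

lemma cube_eq (s : ℕ) (Q : ℕ × (Fin d → ℤ)) :
    cube s Q = {y : Ed d | ∀ i, y i ∈ Set.Ico ((2 : ℝ) ^ ((Q.1 : ℤ) - s) * Q.2 i)
      ((2 : ℝ) ^ ((Q.1 : ℤ) - s) * (Q.2 i + 1))} := by
  ext y
  change loc s y ∈ cells Q ↔ ∀ i, _
  rw [mem_cells]
  refine forall_congr' fun i => ?_
  rw [loc_apply, Int.le_floor, Int.floor_lt, zpow_sub₀ (by norm_num), zpow_natCast, zpow_natCast,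
    Set.mem_Ico, div_mul_eq_mul_div, div_mul_eq_mul_div, div_le_iff₀ (by positivity),
    lt_div_iff₀ (by positivity), mul_comm (y i)]
  push_cast
  rfl

lemma isDyadicCube_cube (s : ℕ) (Q : ℕ × (Fin d → ℤ)) : IsDyadicCube (cube s Q) :=
  ⟨_, _, cube_eq s Q⟩

lemma eventually_exists_cube {Q : Set (Ed d)} (h : IsDyadicCube Q) :
    ∀ᶠ s : ℕ in atTop, ∃ R, cube s R = Q := by
  obtain ⟨n, m, rfl⟩ := h
  filter_upwards [eventually_ge_atTop (-n).toNat] with s hs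
  refine ⟨((n + s).toNat, m), ?_⟩
  rw [cube_eq, show (((n + s).toNat : ℕ) : ℤ) - s = n by omega]

lemma loc_surjective (s : ℕ) : Function.Surjective (loc s : Ed d → Fin d → ℤ) := by
  intro x
  refine ⟨WithLp.toLp 2 fun i => x i / 2 ^ s, funext fun i => ?_⟩
  rw [loc_apply]
  simp only
  rw [mul_div_cancel₀ _ (by positivity), Int.floor_intCast]

lemma cube_subset_cube {s : ℕ} {P Q : ℕ × (Fin d → ℤ)} :
    cube s P ⊆ cube s Q ↔ cells P ⊆ cells Q := by
  constructor
  · intro h x hx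
    obtain ⟨y, rfl⟩ := loc_surjective s x
    exact h hx
  · exact fun h y hy => h hy

lemma cube_injective (hd : 1 ≤ d) (s : ℕ) :
    Function.Injective (cube s : ℕ × (Fin d → ℤ) → Set (Ed d)) := by
  intro P Q h
  have hc : cells P = cells Q :=
    (cube_subset_cube.1 h.subset).antisymm (cube_subset_cube.1 h.symm.subset)
  obtain ⟨x, hx⟩ := cells_nonempty P
  refine eq_of_mem_cells hx (hc ▸ hx) ?_
  have h1 := card_cells P
  rw [hc, card_cells Q, pow_left_inj₀ (by positivity) (by positivity) (by omega)] at h1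
  exact (pow_right_injective₀ (by norm_num : (0 : ℝ) < 2) (by norm_num) h1).symm

lemma ae_mem_interior {Q : Set (Ed d)} (h : IsDyadicCube Q) :
    ∀ᵐ y : Ed d, y ∈ Q → y ∈ interior Q := by
  obtain ⟨n, m, rfl⟩ := h
  have hae : ∀ᵐ y : Ed d, ∀ i, y i ≠ (2 : ℝ) ^ n * m i := ae_all_iff.2 fun i => ae_ne i _
  filter_upwards [hae] with y hy hyQ
  refine interior_maximal (t := {y : Ed d | ∀ i, y i ∈ Set.Ioo ((2 : ℝ) ^ n * m i)
    ((2 : ℝ) ^ n * (m i + 1))}) (fun z (hz : ∀ i, _) i => Set.Ioo_subset_Ico_self (hz i)) ?_ ?_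
  · simp only [Set.ofPred_forall]
    exact isOpen_iInter_of_finite fun i => isOpen_Ioo.preimage (by fun_prop)
  · exact fun i => ⟨lt_of_le_of_ne (hyQ i).1 (hy i).symm, (hyQ i).2⟩

/-! ### The variation of the maximal function -/

lemma ofReal_abs_integral_gridMax_le {f : Ed d → ℝ} (hf : Integrable f) (s : ℕ)
    {𝒬 : Finset (ℕ × (Fin d → ℤ))} (h𝒬 : IsConvexFam 𝒬) {Ω : Set (Ed d)}
    (hΩ : ∀ Q ∈ 𝒬, interior (cube s Q) ⊆ Ω) {φ : Ed d → Ed d} (hφ : IsTestField Ω φ)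
    (hbox : ∀ y ∈ tsupport φ, ∀ i, edgeBox s (pred (loc s y) i, i) ⊆ Ω) :
    ENNReal.ofReal |∫ y, gridMax 𝒬 (cellAvg s f) (loc s y) * divergence φ y| ≤
      ENNReal.ofReal (discreteConst d) * (2 * d) * var Ω f := by
  classical
  set Z := (finite_loc_image s hφ.2.1.isCompact.isBounded).toFinset with hZ
  have hZmem : ∀ y ∈ tsupport φ, loc s y ∈ Z := fun y hy => by
    rw [hZ, Set.Finite.mem_toFinset]
    exact ⟨y, hy, rfl⟩
  set 𝓔₀ := (Z ×ˢ (Finset.univ : Finset (Fin d))).image fun p => (pred p.1 p.2, p.2) with h𝓔₀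
  set 𝓔 := 𝓔₀ ∪ 𝒬.biUnion edges
  have h𝓔 : ∀ e ∈ 𝓔, edgeBox s e ⊆ Ω := by
    intro e he
    rcases Finset.mem_union.1 he with he | he
    · obtain ⟨⟨z, i⟩, hz, rfl⟩ := Finset.mem_image.1 he
      have hz' := (Finset.mem_product.1 hz).1
      rw [hZ, Set.Finite.mem_toFinset] at hz'
      obtain ⟨y, hy, rfl⟩ := hz'
      exact hbox y hy i
    · obtain ⟨Q, hQ, he⟩ := Finset.mem_biUnion.1 he
      exact (edgeBox_subset_interior_cube s he).trans (hΩ Q hQ)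
  have hpos := (faceArea_pos d s).le
  have hC : 0 ≤ discreteConst d := zero_le_one.trans (one_le_discreteConst d)
  have h1 := abs_integral_step_mul_divergence_le s (abs_gridMax_le 𝒬 (abs_cellAvg_le s hf))
    hφ.1 hφ.2.1 hφ.2.2.2 hZmem
  have h2 : ∑ e ∈ 𝓔₀, jump (gridMax 𝒬 (cellAvg s f)) e ≤
      ∑ e ∈ 𝓔, jump (gridMax 𝒬 (cellAvg s f)) e :=
    Finset.sum_le_sum_of_subset_of_nonneg Finset.subset_union_left fun e _ _ => jump_nonneg _ e
  have h3 := sum_jump_max_le (𝓔 := 𝓔) h𝒬 (isMaxFun_gridMax 𝒬 (cellAvg s f)) fun Q hQ =>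
    (Finset.subset_biUnion_of_mem edges hQ).trans Finset.subset_union_right
  have h4 : |∫ y, gridMax 𝒬 (cellAvg s f) (loc s y) * divergence φ y| ≤
      discreteConst d * (faceArea d s * ∑ e ∈ 𝓔, jump (cellAvg s f) e) := by
    refine h1.trans ((mul_le_mul_of_nonneg_left (h2.trans h3) hpos).trans (le_of_eq ?_))
    ring
  refine (ENNReal.ofReal_le_ofReal h4).trans ?_
  rw [ENNReal.ofReal_mul hC, mul_assoc]
  exact mul_le_mul_right (ofReal_sum_jump_le hf s h𝓔) _

lemma exists_grid_family (hd : 1 ≤ d) (s : ℕ) {𝒬 : Finset (Set (Ed d))}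
    (h𝒬 : ∀ P : Set (Ed d), IsDyadicCube P → P ⊆ (⋃ Q ∈ 𝒬, Q) → (∃ Q ∈ 𝒬, Q ⊆ P) → P ∈ 𝒬) :
    ∃ 𝒬' : Finset (ℕ × (Fin d → ℤ)), IsConvexFam 𝒬' ∧ ∀ Q, Q ∈ 𝒬' ↔ cube s Q ∈ 𝒬 := by
  have hmem : ∀ Q, Q ∈ (𝒬.finite_toSet.preimage (cube_injective hd s).injOn).toFinset ↔
      cube s Q ∈ 𝒬 := fun Q => by simp
  refine ⟨_, fun P hP R hR T _ _ hPT hTR => ?_, hmem⟩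
  rw [hmem] at hP hR ⊢
  exact h𝒬 _ (isDyadicCube_cube s T) ((cube_subset_cube.2 hTR).trans
    (Set.subset_biUnion_of_mem (u := fun Q => Q) hR)) ⟨_, hP, cube_subset_cube.2 hPT⟩

lemma abs_finMaxFun_sub_gridMax_le {f : Ed d → ℝ} (hf : Integrable f) {s : ℕ}
    {𝒬 : Finset (Set (Ed d))} {𝒬' : Finset (ℕ × (Fin d → ℤ))}
    (h : ∀ Q, Q ∈ 𝒬' ↔ cube s Q ∈ 𝒬) (hs : ∀ Q ∈ 𝒬, ∃ R, cube s R = Q) (y : Ed d) :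
    |finMaxFun 𝒬 f y - gridMax 𝒬' (cellAvg s f) (loc s y)| ≤ |f y - cellAvg s f (loc s y)| := by
  have hset : {v : ℝ | ∃ Q ∈ 𝒬, y ∈ Q ∧ v = ⨍ z in Q, f z} =
      {v | ∃ Q ∈ 𝒬', loc s y ∈ cells Q ∧ v = avg (cellAvg s f) Q} := by
    ext v
    constructor
    · rintro ⟨Q, hQ, hy, rfl⟩
      obtain ⟨R, rfl⟩ := hs Q hQ
      exact ⟨R, (h R).2 hQ, hy, (avg_cellAvg s hf R).symm⟩
    · rintro ⟨R, hR, hy, rfl⟩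
      exact ⟨cube s R, (h R).1 hR, hy, avg_cellAvg s hf R⟩
  rw [finMaxFun, hset, gridMax]
  exact abs_sSup_sub_sSup_le (finite_gridMax 𝒬' _ _) _ _

lemma abs_integral_mul_divergence_sub_le {f M g N : Ed d → ℝ} {φ : Ed d → Ed d} {B : ℝ}
    (hB : ∀ y, |divergence φ y| ≤ B)
    (hM : Integrable fun y => M y * divergence φ y)
    (hN : Integrable fun y => N y * divergence φ y)
    (hfg : IntegrableOn (fun y => |f y - g y|) (tsupport φ))
    (h : ∀ y, |M y - N y| ≤ |f y - g y|) :
    |(∫ y, M y * divergence φ y) - ∫ y, N y * divergence φ y| ≤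
      B * ∫ y in tsupport φ, |f y - g y| := by
  rw [← integral_sub hM hN, ← integral_const_mul,
    ← integral_indicator (isClosed_tsupport φ).measurableSet]
  refine abs_integral_le_integral_abs.trans (integral_mono (hM.sub hN).abs
    (IntegrableOn.integrable_indicator (hfg.const_mul B)
      (isClosed_tsupport φ).measurableSet) fun y => ?_)
  by_cases hy : y ∈ tsupport φ
  · simp only [Set.indicator_of_mem hy]
    rw [← sub_mul, abs_mul, mul_comm]
    exact mul_le_mul (hB y) (h y) (abs_nonneg _) ((abs_nonneg _).trans (hB y))
  · simp [Set.indicator_of_notMem hy, divergence_eq_zero hy]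

lemma eventually_edgeBox_subset {Ω K : Set (Ed d)} (hΩ : IsOpen Ω) (hK : IsCompact K)
    (h : K ⊆ Ω) : ∀ᶠ s : ℕ in atTop, ∀ y ∈ K, ∀ i, edgeBox s (pred (loc s y) i, i) ⊆ Ω := by
  obtain ⟨δ, hδ, hsub⟩ := hK.exists_cthickening_subset_open hΩ h
  have hlim : Tendsto (fun s : ℕ => (d : ℝ) * (2 / 2 ^ s)) atTop (𝓝 0) := by
    have h2 : Tendsto (fun s : ℕ => (2 : ℝ) / 2 ^ s) atTop (𝓝 0) :=
      tendsto_const_nhds.div_atTop (tendsto_pow_atTop_atTop_of_one_lt (by norm_num))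
    simpa using h2.const_mul (d : ℝ)
  filter_upwards [hlim.eventually_le_const hδ] with s hs y hy i w hw
  exact hsub (mem_cthickening_of_dist_le w y δ K hy ((dist_le_of_mem_edgeBox hw).trans hs))

lemma var_finMaxFun_le_of_integrable (hd : 1 ≤ d) {𝒬 : Finset (Set (Ed d))}
    (hdy : ∀ Q ∈ 𝒬, IsDyadicCube Q)
    (h𝒬 : ∀ P : Set (Ed d), IsDyadicCube P → P ⊆ (⋃ Q ∈ 𝒬, Q) → (∃ Q ∈ 𝒬, Q ⊆ P) → P ∈ 𝒬)
    {Ω : Set (Ed d)} (hΩ : IsOpen Ω) (hint : (⋃ Q ∈ 𝒬, interior Q) ⊆ Ω)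
    {f : Ed d → ℝ} (hf : Integrable f) :
    var Ω (finMaxFun 𝒬 f) ≤ ENNReal.ofReal (discreteConst d) * (2 * d) * var Ω f := by
  refine var_le fun φ hφ => ?_
  by_cases hM : Integrable fun y => finMaxFun 𝒬 f y * divergence φ y
  swap
  · rw [integral_undef hM, ENNReal.ofReal_zero]
    exact zero_le
  obtain ⟨B, hB⟩ := exists_abs_divergence_le hφ.1 hφ.2.1
  have hlim : Tendsto (fun s => ENNReal.ofReal (B * ∫ y in tsupport φ,
      |f y - cellAvg s f (loc s y)|) + ENNReal.ofReal (discreteConst d) * (2 * d) * var Ω f)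
      atTop (𝓝 (ENNReal.ofReal (B * 0) +
        ENNReal.ofReal (discreteConst d) * (2 * d) * var Ω f)) :=
    ((ENNReal.continuous_ofReal.tendsto _).comp
      ((tendsto_setIntegral_abs_sub_cellAvg hf hφ.2.1.isCompact).const_mul B)).add_const _
  rw [mul_zero, ENNReal.ofReal_zero, zero_add] at hlim
  refine ge_of_tendsto hlim ?_
  have hev : ∀ᶠ s : ℕ in atTop, ∀ Q ∈ 𝒬, ∃ R, cube s R = Q :=
    (Finset.eventually_all 𝒬).2 fun Q hQ => eventually_exists_cube (hdy Q hQ)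
  filter_upwards [hev, eventually_edgeBox_subset hΩ hφ.2.1.isCompact hφ.2.2.1] with s hs hbox
  obtain ⟨𝒬', hconv, hmem⟩ := exists_grid_family hd s h𝒬
  have hbd := abs_cellAvg_le s hf
  have hN : Integrable fun y => gridMax 𝒬' (cellAvg s f) (loc s y) * divergence φ y :=
    Integrable.bdd_mul ((continuous_divergence hφ.1).integrable_of_hasCompactSupport
      (HasCompactSupport.intro hφ.2.1.isCompact fun y hy => divergence_eq_zero hy))
      (measurable_comp_loc s (gridMax 𝒬' (cellAvg s f))).aestronglyMeasurable
      (Eventually.of_forall fun y => abs_gridMax_le 𝒬' hbd _)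
  have h1 := abs_integral_mul_divergence_sub_le hB hM hN
    (hf.integrableOn.sub (integrableOn_comp_loc s hbd hφ.2.1.isCompact)).abs
    (abs_finMaxFun_sub_gridMax_le hf hmem hs)
  have h2 := ofReal_abs_integral_gridMax_le hf s hconv
    (fun Q hQ => (Set.subset_biUnion_of_mem (u := fun Q => interior Q)
      ((hmem Q).1 hQ)).trans hint) hφ hbox
  have h3 : ∫ y, finMaxFun 𝒬 f y * divergence φ y ≤
      B * (∫ y in tsupport φ, |f y - cellAvg s f (loc s y)|) +
        |∫ y, gridMax 𝒬' (cellAvg s f) (loc s y) * divergence φ y| := by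
    linarith [le_abs_self (∫ y, gridMax 𝒬' (cellAvg s f) (loc s y) * divergence φ y),
      (le_abs_self _).trans h1]
  exact (ENNReal.ofReal_le_ofReal h3).trans (ENNReal.ofReal_add_le.trans (add_le_add le_rfl h2))

lemma var_congr {Ω : Set (Ed d)} (hΩ : IsOpen Ω) {f g : Ed d → ℝ} (h : EqOn f g Ω) :
    var Ω f = var Ω g := by
  refine iSup_congr fun φ => iSup_congr fun _ => congrArg ENNReal.ofReal ?_
  exact setIntegral_congr_fun hΩ.measurableSet fun y hy => congrArg (· * divergence φ y) (h hy)

lemma finMaxFun_congr {𝒬 : Finset (Set (Ed d))} (hdy : ∀ Q ∈ 𝒬, IsDyadicCube Q)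
    {Ω : Set (Ed d)} (hint : (⋃ Q ∈ 𝒬, interior Q) ⊆ Ω) {f g : Ed d → ℝ} (h : EqOn f g Ω) :
    EqOn (finMaxFun 𝒬 f) (finMaxFun 𝒬 g) Ω := by
  have havg : ∀ Q ∈ 𝒬, ⨍ z in Q, f z = ⨍ z in Q, g z := by
    intro Q hQ
    have hQm : MeasurableSet Q := by
      obtain ⟨n, m, rfl⟩ := hdy Q hQ
      simp only [Set.ofPred_forall]
      refine MeasurableSet.iInter fun i => measurableSet_Ico.preimage (Continuous.measurable ?_)
      fun_prop
    rw [setAverage_eq, setAverage_eq, setIntegral_congr_ae hQm]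
    filter_upwards [ae_mem_interior (hdy Q hQ)] with y hy hyQ
    exact h (hint (Set.mem_biUnion hQ (hy hyQ)))
  intro y hy
  have hset : {v : ℝ | ∃ Q ∈ 𝒬, y ∈ Q ∧ v = ⨍ z in Q, f z} =
      {v : ℝ | ∃ Q ∈ 𝒬, y ∈ Q ∧ v = ⨍ z in Q, g z} := by
    ext v
    refine exists_congr fun Q => and_congr_right fun hQ => ?_
    rw [havg Q hQ]
  rw [finMaxFun, finMaxFun, hset, h hy]

end Variation

end DyadicVariation

/-- Finite version of the variation bound: there is `C = C_d < ∞` such that for every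
finite, upward-closed (inside its union) family `𝒬` of dyadic cubes, every open `Ω`
containing all interiors of cubes of `𝒬` and every `f ∈ L¹(Ω)`,
`var_Ω (M_𝒬 f) ≤ C · var_Ω f`. -/
theorem variation_of_finite_dyadic_maximal_function (d : ℕ) (hd : 1 ≤ d) :
    ∃ C : ℝ≥0∞, C ≠ ∞ ∧
      ∀ (𝒬 : Finset (Set (Ed d))), (∀ Q ∈ 𝒬, IsDyadicCube Q) →
        (∀ P : Set (Ed d), IsDyadicCube P → P ⊆ (⋃ Q ∈ 𝒬, Q) →
          (∃ Q ∈ 𝒬, Q ⊆ P) → P ∈ 𝒬) →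
        ∀ (Ω : Set (Ed d)), IsOpen Ω → (⋃ Q ∈ 𝒬, interior Q) ⊆ Ω →
          ∀ f : Ed d → ℝ, IntegrableOn f Ω volume →
            var Ω (finMaxFun 𝒬 f) ≤ C * var Ω f := by
  refine ⟨ENNReal.ofReal (DyadicVariation.discreteConst d) * (2 * d),
    ENNReal.mul_ne_top ENNReal.ofReal_ne_top (ENNReal.mul_ne_top (by simp) (by simp)), ?_⟩
  intro 𝒬 hdy h𝒬 Ω hΩ hint f hf
  have h : EqOn f (Ω.indicator f) Ω := fun y hy => (Set.indicator_of_mem hy f).symm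
  rw [DyadicVariation.var_congr hΩ h,
    DyadicVariation.var_congr hΩ (DyadicVariation.finMaxFun_congr hdy hint h)]
  exact DyadicVariation.var_finMaxFun_le_of_integrable hd hdy h𝒬 hΩ hint
    (hf.integrable_indicator hΩ.measurableSet)

end
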